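/- Let G = A₁ ∗_C A₋₁ be a word hyperbolic group which is the amalgamated free product of A₁ and A₋₁ along a virtually cyclic subgroup C. For i = ±1 let Xᵢ be a finite generating set of Aᵢ, closed under inversion and containing a finite generating set 𝒞 of C closed under inversion, and put 𝒢 = X₁ ∪ X₋₁. Then there exists a constant K > 0 such that every g ∈ G is represented by a word u = u₀u₁…u_s over 𝒢 which is K-quasigeodesic with respect to d_𝒢 and satisfies: (i) each u_k is a d_{X_j}-geodesic word for some j ∈ {1, −1}, and for k > 0 the element ū_k does not belong to C and is shortest with respect to d_{X_j} in the coset C·ū_k; (ii) if ū_k ∈ A_j − C then ū_{k−1} ∈ A_{−j} − C for k = 1,…,s; (iii) if s = 0 and g ∈ C then u₀ is a d_{X₁}-geodesic word representing g. -/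

import Mathlib

universe u v w

section Defs

variable {G : Type u} [Group G]

/-- A finite generating set closed under inversion. -/
def IsSymmGen (X : Set G) : Prop :=
  X.Finite ∧ (∀ x ∈ X, x⁻¹ ∈ X) ∧ Subgroup.closure X = ⊤

/-- Word length of `g` with respect to `X`. -/
noncomputable def wordLength (X : Set G) (g : G) : ℕ :=
  sInf {n : ℕ | ∃ l : List G, l.length = n ∧ (∀ x ∈ l, x ∈ X) ∧ l.prod = g}

/-- Word metric. -/
noncomputable def wordDist (X : Set G) (g h : G) : ℕ :=
  wordLength X (g⁻¹ * h)

/-- Gromov product with respect to the word metric. -/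
noncomputable def gromovProd (X : Set G) (x y w : G) : ℝ :=
  ((wordDist X x w : ℝ) + (wordDist X y w : ℝ) - (wordDist X x y : ℝ)) / 2

end Defs

/-- A group is word hyperbolic if for some finite symmetric generating set the Gromov
product satisfies the hyperbolicity inequality. -/
def IsWordHyperbolic (G : Type u) [Group G] : Prop :=
  ∃ X : Set G, IsSymmGen X ∧ ∃ δ : ℝ, 0 ≤ δ ∧
    ∀ x y z w : G,
      gromovProd X x z w ≥ min (gromovProd X x y w) (gromovProd X y z w) - δ

/-- A subgroup is quasiconvex: it is finitely generated and word lengths distort linearly. -/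
def IsQuasiconvex {G : Type u} [Group G] (A : Subgroup G) : Prop :=
  ∃ Y : Set ↥A, IsSymmGen Y ∧ ∃ X : Set G, IsSymmGen X ∧ ∃ c : ℝ, 0 < c ∧
    ∀ a : ↥A, (wordLength Y a : ℝ) ≤ c * (wordLength X (a : G) : ℝ) + c

/-- Property (Q): every finitely generated subgroup is quasiconvex. -/
def HasPropertyQ (G : Type u) [Group G] : Prop :=
  ∀ H : Subgroup G, H.FG → IsQuasiconvex H

/-- A group is virtually cyclic if it has a cyclic subgroup of finite index. -/
def IsVirtuallyCyclic (C : Type u) [Group C] : Prop :=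
  ∃ Z : Subgroup C, IsCyclic ↥Z ∧ Z.FiniteIndex

/-- `G` is the amalgamated free product of its subgroups `A` and `B` along `C`:
`C = A ⊓ B`, `A ⊔ B = ⊤` and `G` has the pushout universal property. -/
structure IsAmalgamatedFreeProduct {G : Type u} [Group G] (A B C : Subgroup G) : Prop where
  le_left : C ≤ A
  le_right : C ≤ B
  inf_eq : A ⊓ B = C
  sup_eq_top : A ⊔ B = ⊤
  univ : ∀ (K : Type u) [Group K] (f : ↥A →* K) (g : ↥B →* K),
    (∀ (c : G) (hA : c ∈ A) (hB : c ∈ B), f ⟨c, hA⟩ = g ⟨c, hB⟩) →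
    ∃ h : G →* K, (∀ a : ↥A, h a = f a) ∧ (∀ b : ↥B, h b = g b)

section Words

variable {G : Type u} [Group G]

/-- A word over the alphabet `X`. -/
def IsWordOver (X : Set G) (l : List G) : Prop := ∀ x ∈ l, x ∈ X

/-- A geodesic word over `X`. -/
def IsGeodesicWord (X : Set G) (l : List G) : Prop :=
  IsWordOver X l ∧ l.length = wordLength X l.prod

/-- A `lam`-quasigeodesic word over `X`: every subword `v` satisfies
`l(v) ≤ lam * l_X(v̄) + lam`. -/
def IsQuasigeodesicWord (X : Set G) (lam : ℝ) (l : List G) : Prop :=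
  IsWordOver X l ∧
    ∀ v : List G, v <:+: l → (v.length : ℝ) ≤ lam * (wordLength X v.prod : ℝ) + lam

/-- `g` is a shortest element of the subset `S` with respect to `wordLength X`. -/
def ShortestIn (X : Set G) (g : G) (S : Set G) : Prop :=
  g ∈ S ∧ ∀ s ∈ S, wordLength X g ≤ wordLength X s

end Words

/-- `G` together with `ια, ιβ` is the pushout of `ℤ → A, 1 ↦ x` and `ℤ → B, 1 ↦ y`. -/
structure IsAmalgamOverZ {A : Type u} {B : Type v} {G : Type w}
    [Group A] [Group B] [Group G]
    (ια : A →* G) (ιβ : B →* G) (x : A) (y : B) : Prop where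
  comm : ια x = ιβ y
  gen : ια.range ⊔ ιβ.range = ⊤
  univ : ∀ (K : Type (max u v w)) [Group K] (f : A →* K) (g : B →* K),
    f x = g y → ∃ h : G →* K, h.comp ια = f ∧ h.comp ιβ = g

section HyperbolicLength

variable {G : Type u} [Group G]

/-- A length function on a group whose left-invariant metric `(x, y) ↦ ℓ (x⁻¹ * y)` is proper,
discretely geodesic and satisfies the four-point hyperbolicity condition. -/
structure IsHyperbolicLength (ℓ : G → ℕ) (δ : ℕ) : Prop where
  one : ℓ 1 = 0
  inv : ∀ g, ℓ g⁻¹ = ℓ g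
  mul : ∀ g h, ℓ (g * h) ≤ ℓ g + ℓ h
  four : ∀ x y z w,
    ℓ (x⁻¹ * z) + ℓ (y⁻¹ * w) ≤ ℓ (x⁻¹ * y) + ℓ (z⁻¹ * w) + 2 * δ ∨
      ℓ (x⁻¹ * z) + ℓ (y⁻¹ * w) ≤ ℓ (y⁻¹ * z) + ℓ (x⁻¹ * w) + 2 * δ
  ball : ∀ n, {g | ℓ g ≤ n}.Finite
  geod : ∀ g r, r ≤ ℓ g → ∃ y, ℓ y = r ∧ ℓ (y⁻¹ * g) + r = ℓ g

/-- The orbit `n ↦ z ^ n` is a rough geodesic that goes to infinity. -/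
structure IsAxis (ℓ : G → ℕ) (z : G) (D : ℕ) : Prop where
  add : ∀ m n : ℕ, ℓ (z ^ m) + ℓ (z ^ n) ≤ ℓ (z ^ (m + n)) + D
  le : ∀ n : ℕ, n ≤ ℓ (z ^ n) + D

/-- `g` is a shortest element of the coset `⟨z⟩ g`. -/
def IsCosetMin (ℓ : G → ℕ) (z g : G) : Prop := ∀ k : ℤ, ℓ g ≤ ℓ (z ^ k * g)

variable {ℓ : G → ℕ} {δ : ℕ}

namespace IsHyperbolicLength

theorem mul_inv_comm (h : IsHyperbolicLength ℓ δ) (x y : G) : ℓ (x⁻¹ * y) = ℓ (y⁻¹ * x) := by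
  rw [← h.inv (x⁻¹ * y)]; simp

theorem le_mul_left (h : IsHyperbolicLength ℓ δ) (x y : G) : ℓ y ≤ ℓ x + ℓ (x * y) := by
  have := h.mul x⁻¹ (x * y)
  rwa [inv_mul_cancel_left, h.inv] at this

theorem le_mul_right (h : IsHyperbolicLength ℓ δ) (x y : G) : ℓ x ≤ ℓ (x * y) + ℓ y := by
  have := h.mul (x * y) y⁻¹
  rwa [mul_inv_cancel_right, h.inv] at this

theorem pow_le (h : IsHyperbolicLength ℓ δ) (x : G) (n : ℕ) : ℓ (x ^ n) ≤ n * ℓ x := by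
  induction n with
  | zero => simp [h.one]
  | succ n ih =>
    have := h.mul (x ^ n) x
    rw [pow_succ]
    linarith

theorem pow_le_of_le (h : IsHyperbolicLength ℓ δ) (x : G) {n m : ℕ} (hn : n ≤ m) :
    ℓ (x ^ n) ≤ m * ℓ x :=
  (h.pow_le x n).trans (Nat.mul_le_mul_right _ hn)

theorem zpow_neg (h : IsHyperbolicLength ℓ δ) (x : G) (n : ℤ) : ℓ (x ^ (-n)) = ℓ (x ^ n) := by
  rw [_root_.zpow_neg, h.inv]

theorem zpow_natAbs (h : IsHyperbolicLength ℓ δ) (x : G) (n : ℤ) :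
    ℓ (x ^ n) = ℓ (x ^ n.natAbs) := by
  obtain ⟨m, rfl | rfl⟩ := n.eq_nat_or_neg
  · simp
  · rw [h.zpow_neg]; simp

/-- An isometry of small displacement growth whose powers `t ^ k`, `k ≤ N`, all displace `1` by at
most `M`, where `M` is attained and large, displaces some other point less. -/
theorem exists_conj_lt (h : IsHyperbolicLength ℓ δ) {t : G} {N M c : ℕ}
    (hM : ∀ k ≤ N, ℓ (t ^ k) ≤ M) {m : ℕ} (hmN : m ≤ N) (hm : ℓ (t ^ m) = M)
    (hlarge : 4 * (4 * δ + 1) + c < M)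
    (hc : ∀ k ≤ N, 1 ≤ k → ℓ (t ^ (2 * k)) ≤ ℓ (t ^ k) + c) :
    ∃ y, ∀ k ≤ N, ℓ (y⁻¹ * t ^ k * y) < M := by
  obtain ⟨y, hy, hy'⟩ := h.geod (t ^ m) (4 * δ + 1) (by omega)
  refine ⟨y, fun k hk => ?_⟩
  have e1 := h.mul (y⁻¹ * t ^ k) y
  have e2 := h.mul y⁻¹ (t ^ k)
  have e3 := h.inv y
  have e4 := hM k hk
  by_cases hsmall : ℓ (t ^ k) + 2 * (4 * δ + 1) < M
  · omega
  have hk1 : 1 ≤ k := by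
    by_contra h0
    have : k = 0 := by omega
    subst this
    simp [h.one] at hsmall
    omega
  have hd : ℓ ((t ^ m)⁻¹ * t ^ k) ≤ M := by
    rcases le_total m k with hmk | hmk
    · obtain ⟨q, rfl⟩ := Nat.exists_eq_add_of_le hmk
      rw [pow_add, inv_mul_cancel_left]
      exact hM q (by omega)
    · obtain ⟨q, rfl⟩ := Nat.exists_eq_add_of_le hmk
      rw [h.mul_inv_comm, pow_add, inv_mul_cancel_left]
      exact hM q (by omega)
  have f1 := h.four y (t ^ m) (t ^ k) 1
  have f2 := h.four y (t ^ k) (t ^ k)⁻¹ 1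
  have f3 := h.four y 1 (t ^ k * y) (t ^ k)
  have g1 : ℓ ((t ^ k)⁻¹ * (t ^ k)⁻¹) = ℓ (t ^ (2 * k)) := by
    rw [← mul_inv_rev, h.inv, ← pow_add, two_mul]
  have g2 : ℓ ((t ^ k * y)⁻¹ * t ^ k) = ℓ y := by simp [h.inv]
  have g3 : ℓ (t ^ k * y) = ℓ (y⁻¹ * (t ^ k)⁻¹) := by
    rw [← h.inv (t ^ k * y), mul_inv_rev]
  have g4 := hc k hk hk1
  simp only [mul_one, inv_one, one_mul, inv_inv, h.inv, g1, g2, g3, ← mul_assoc] at f1 f2 f3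
  omega

/-- An element of infinite order has a power which is, up to conjugation, expanding. -/
theorem exists_expanding_pow (h : IsHyperbolicLength ℓ δ) {g : G}
    (hg : ∀ n : ℕ, 1 ≤ n → g ^ n ≠ 1) (c : ℕ) :
    ∃ (x : G) (k : ℕ), 1 ≤ k ∧ ℓ ((x⁻¹ * g * x) ^ k) + c < ℓ ((x⁻¹ * g * x) ^ (2 * k)) := by
  classical
  set R := 4 * (4 * δ + 1) + c with hR
  set N := (h.ball R).toFinset.card with hN
  let F : G → ℕ := fun x => (Finset.range (N + 1)).sup fun k => ℓ ((x⁻¹ * g * x) ^ k)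
  obtain ⟨x, hx⟩ : ∃ x, ∀ y, F x ≤ F y :=
    ⟨Function.argmin F, fun y => Function.argmin_le F y⟩
  have conj_pow' : ∀ (y : G) (k : ℕ), (y⁻¹ * g * y) ^ k = y⁻¹ * g ^ k * y := by
    intro y k
    simpa using conj_pow (i := k) (a := y⁻¹) (b := g)
  have hFle : ∀ y, ∀ k ≤ N, ℓ ((y⁻¹ * g * y) ^ k) ≤ F y := fun y k hk =>
    Finset.le_sup (f := fun k => ℓ ((y⁻¹ * g * y) ^ k)) (Finset.mem_range.2 (by omega))
  have hFat : ∀ y, ∃ k ≤ N, ℓ ((y⁻¹ * g * y) ^ k) = F y := by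
    intro y
    obtain ⟨k, hk, hk'⟩ := Finset.exists_mem_eq_sup (Finset.range (N + 1)) (by simp)
      fun k => ℓ ((y⁻¹ * g * y) ^ k)
    exact ⟨k, by simpa [Nat.lt_succ_iff] using hk, hk'.symm⟩
  have hlarge : R < F x := by
    by_contra hle
    obtain ⟨a, ha, b, hb, hab, heq⟩ := Finset.exists_ne_map_eq_of_card_lt_of_maps_to
      (s := Finset.range (N + 1)) (t := (h.ball R).toFinset) (by simp [hN])
      (f := fun k => (x⁻¹ * g * x) ^ k) (by
        intro k hk
        have := hFle x k (by simpa [Nat.lt_succ_iff] using hk)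
        simp only [Set.Finite.coe_toFinset, Set.mem_ofPred_eq]
        omega)
    simp only [conj_pow', mul_left_inj, mul_right_inj] at heq
    wlog hlt : a < b generalizing a b
    · exact this b hb a ha hab.symm heq.symm (by omega)
    obtain ⟨q, rfl⟩ := Nat.exists_eq_add_of_le hlt.le
    rw [pow_add, left_eq_mul] at heq
    exact hg q (by omega) heq
  by_contra! hcon
  obtain ⟨m, hmN, hm⟩ := hFat x
  obtain ⟨y, hy⟩ := h.exists_conj_lt (hFle x) hmN hm hlarge fun k _ hk => hcon x k hk
  obtain ⟨k, hk, hk'⟩ := hFat (x * y)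
  have := hy k hk
  have h2 := hx (x * y)
  rw [conj_pow'] at hk' this
  simp only [mul_inv_rev, mul_assoc] at hk' this
  omega

theorem expanding_succ (h : IsHyperbolicLength ℓ δ) {t : G}
    (ht : ℓ t + 4 * δ < ℓ (t ^ 2)) (n : ℕ) : ℓ (t ^ n) + 2 * δ + 1 ≤ ℓ (t ^ (n + 1)) := by
  have h2 := h.mul t t
  rw [← pow_two] at h2
  induction n with
  | zero => simp [h.one]; omega
  | succ n ih =>
    have f := h.four 1 (t ^ n) (t ^ (n + 1)) (t ^ (n + 2))
    have g1 : (t ^ n)⁻¹ * t ^ (n + 2) = t ^ 2 := by rw [pow_add]; group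
    have g2 : (t ^ n)⁻¹ * t ^ (n + 1) = t := by rw [pow_add]; group
    have g3 : (t ^ (n + 1))⁻¹ * t ^ (n + 2) = t := by
      rw [show n + 2 = n + 1 + 1 from rfl, pow_succ t (n + 1)]; group
    simp only [inv_one, one_mul, g1, g2, g3] at f
    change _ ≤ ℓ (t ^ (n + 2))
    omega

theorem expanding_add (h : IsHyperbolicLength ℓ δ) {t : G}
    (ht : ℓ t + 4 * δ < ℓ (t ^ 2)) (m n : ℕ) :
    ℓ (t ^ m) + ℓ (t ^ n) ≤ ℓ (t ^ (m + n)) + ℓ t := by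
  rcases n with _ | n
  · simp [h.one]
  have f := h.four 1 (t ^ (m + (n + 1))) (t ^ (m + 1)) (t ^ m)
  have g1 : ℓ ((t ^ (m + (n + 1)))⁻¹ * t ^ m) = ℓ (t ^ (n + 1)) := by
    rw [h.mul_inv_comm, pow_add, inv_mul_cancel_left]
  have g2 : ℓ ((t ^ (m + 1))⁻¹ * t ^ m) = ℓ t := by
    rw [h.mul_inv_comm, pow_add, inv_mul_cancel_left, pow_one]
  have g3 : ℓ ((t ^ (m + (n + 1)))⁻¹ * t ^ (m + 1)) = ℓ (t ^ n) := by
    rw [h.mul_inv_comm, show m + (n + 1) = m + 1 + n by omega, pow_add _ (m + 1),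
      inv_mul_cancel_left]
  simp only [inv_one, one_mul, g1, g2, g3] at f
  have s1 := h.expanding_succ ht m
  have s2 := h.expanding_succ ht n
  omega

theorem exists_axis (h : IsHyperbolicLength ℓ δ) {g : G} (hg : ∀ n : ℕ, 1 ≤ n → g ^ n ≠ 1) :
    ∃ k D : ℕ, 1 ≤ k ∧ IsAxis ℓ (g ^ k) D := by
  obtain ⟨x, k, hk, hlt⟩ := h.exists_expanding_pow hg (4 * δ)
  set t := (x⁻¹ * g * x) ^ k with ht
  rw [mul_comm 2 k, pow_mul, ← ht] at hlt
  have hz : ∀ n : ℕ, (g ^ k) ^ n = x * t ^ n * x⁻¹ := by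
    intro n
    rw [← conj_pow, ht, ← conj_pow]
    group
  have up : ∀ n : ℕ, ℓ ((g ^ k) ^ n) ≤ ℓ (t ^ n) + 2 * ℓ x := by
    intro n
    have e1 := h.mul (x * t ^ n) x⁻¹
    have e2 := h.mul x (t ^ n)
    have e3 := h.inv x
    rw [hz]
    omega
  have low : ∀ n : ℕ, ℓ (t ^ n) ≤ ℓ ((g ^ k) ^ n) + 2 * ℓ x := by
    intro n
    have e1 := h.le_mul_right (x * t ^ n) x⁻¹
    have e2 := h.le_mul_left x (t ^ n)
    have e3 := h.inv x
    rw [hz]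
    omega
  refine ⟨k, ℓ t + 6 * ℓ x, hk, ⟨fun m n => ?_, fun n => ?_⟩⟩
  · have := h.expanding_add hlt m n
    have := up m
    have := up n
    have := low (m + n)
    omega
  · have : n ≤ ℓ (t ^ n) := by
      induction n with
      | zero => simp
      | succ n ih =>
        have := h.expanding_succ hlt n
        omega
    have := low n
    omega

end IsHyperbolicLength

namespace IsAxis

variable {z : G} {D : ℕ}

theorem inv (h : IsHyperbolicLength ℓ δ) (hz : IsAxis ℓ z D) : IsAxis ℓ z⁻¹ D := by
  refine ⟨fun m n => ?_, fun n => ?_⟩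
  · simpa only [inv_pow, h.inv] using hz.add m n
  · simpa only [inv_pow, h.inv] using hz.le n

theorem natAbs_le (h : IsHyperbolicLength ℓ δ) (hz : IsAxis ℓ z D) (n : ℤ) :
    n.natAbs ≤ ℓ (z ^ n) + D := by
  rw [h.zpow_natAbs]
  exact hz.le _

theorem pow_ne_one (h : IsHyperbolicLength ℓ δ) (hz : IsAxis ℓ z D) {n : ℕ} (hn : 1 ≤ n) :
    z ^ n ≠ 1 := by
  intro h1
  have h2 := hz.le (n * (D + 1))
  rw [pow_mul, h1, one_pow, h.one] at h2
  nlinarith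

end IsAxis

namespace IsCosetMin

variable {z g : G} {D : ℕ}

theorem inv (hg : IsCosetMin ℓ z g) : IsCosetMin ℓ z⁻¹ g := by
  intro k
  have := hg (-k)
  rwa [zpow_neg, ← inv_zpow] at this

theorem exists_decomp (ℓ : G → ℕ) (z g : G) :
    ∃ (i : ℤ) (g' : G), g = z ^ i * g' ∧ IsCosetMin ℓ z g' := by
  let F : ℤ → ℕ := fun k => ℓ (z ^ k * g)
  refine ⟨-Function.argmin F, z ^ Function.argmin F * g, by simp, fun k => ?_⟩
  rw [← mul_assoc, ← zpow_add]
  exact Function.argmin_le F _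

theorem pow_add_le (h : IsHyperbolicLength ℓ δ) (hz : IsAxis ℓ z D) (hg : IsCosetMin ℓ z g)
    (k : ℕ) : ℓ (z ^ k) + ℓ g ≤ ℓ ((z ^ k)⁻¹ * g) + ((2 * D + 2 * δ + 1) * ℓ z + 2 * δ) := by
  set n := 2 * D + 2 * δ + 1 with hn
  have hmin : ∀ m : ℕ, ℓ g ≤ ℓ ((z ^ m)⁻¹ * g) := by
    intro m
    have := hg (-m)
    rwa [zpow_neg, zpow_natCast] at this
  have hm := hmin k
  rcases le_total k n with hk | hk
  · have := h.pow_le_of_le z hk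
    omega
  obtain ⟨q, rfl⟩ := Nat.exists_eq_add_of_le hk
  have f := h.four g (z ^ (n + q)) (z ^ n) 1
  have g1 : ℓ ((z ^ (n + q))⁻¹ * z ^ n) = ℓ (z ^ q) := by
    rw [h.mul_inv_comm, pow_add z n q, inv_mul_cancel_left]
  rw [g1, h.mul_inv_comm g, h.mul_inv_comm g (z ^ (n + q))] at f
  simp only [mul_one, h.inv] at f
  have a1 := hmin n
  have a2 := hz.add n q
  have a3 := hz.le n
  have a4 := h.pow_le z n
  omega

theorem zpow_add_le (h : IsHyperbolicLength ℓ δ) (hz : IsAxis ℓ z D) (hg : IsCosetMin ℓ z g)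
    (k : ℤ) : ℓ (z ^ k) + ℓ g ≤ ℓ (z ^ k * g) + ((2 * D + 2 * δ + 1) * ℓ z + 2 * δ) := by
  obtain ⟨m, rfl | rfl⟩ := k.eq_nat_or_neg
  · have := hg.inv.pow_add_le h (hz.inv h) m
    simpa only [h.inv, inv_pow, inv_inv, zpow_natCast] using this
  · have := hg.pow_add_le h hz m
    simpa only [zpow_neg, h.inv, zpow_natCast] using this

/-- The nearest-point projection to an axis is contracting. -/
theorem contract (h : IsHyperbolicLength ℓ δ) (hz : IsAxis ℓ z D) {g' : G}
    (hg : IsCosetMin ℓ z g) (hg' : IsCosetMin ℓ z g') (n : ℤ) :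
    ℓ (z ^ n) ≤ 2 * ((2 * D + 2 * δ + 1) * ℓ z + 2 * δ) + 2 * δ ∨
      ℓ g + ℓ (z ^ n) + ℓ g' ≤
        ℓ (g⁻¹ * (z ^ n * g')) + (2 * ((2 * D + 2 * δ + 1) * ℓ z + 2 * δ) + 2 * δ) := by
  have f := h.four g (z ^ n * g') (z ^ n) 1
  have g1 : ℓ (g⁻¹ * z ^ n) = ℓ (z ^ (-n) * g) := by
    rw [h.mul_inv_comm, zpow_neg]
  have g2 : ℓ ((z ^ n * g')⁻¹ * z ^ n) = ℓ g' := by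
    rw [h.mul_inv_comm, inv_mul_cancel_left]
  rw [g1, g2] at f
  simp only [mul_one, h.inv] at f
  have a1 := hg.zpow_add_le h hz (-n)
  have a2 := hg'.zpow_add_le h hz n
  rw [h.zpow_neg] at a1
  omega

end IsCosetMin

namespace IsAxis

variable {z y : G} {D E : ℕ}

/-- If a translate `a • ⟨y⟩` of one axis has endpoints projecting far apart on another axis, every
point of the latter between the two projections is near the translate. -/
theorem exists_near (h : IsHyperbolicLength ℓ δ) (hz : IsAxis ℓ z D) (hy : IsAxis ℓ y D)
    {a b : G} {n j : ℕ} (hab : a * y ^ n = z ^ j * b)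
    (hfar : ℓ a + ℓ (z ^ j) + ℓ b ≤ ℓ (y ^ n) + E) {s : ℕ} (hs : s ≤ j) :
    ∃ i : ℕ, ℓ ((z ^ s)⁻¹ * (a * y ^ i)) ≤ E + 2 * D + 2 * δ + ℓ y := by
  obtain ⟨q, rfl⟩ := Nat.exists_eq_add_of_le hs
  have hzs := hz.add s q
  have hr := h.mul (z ^ s)⁻¹ a
  rw [h.inv] at hr
  have hb : ℓ ((z ^ s)⁻¹ * (a * y ^ n)) ≤ ℓ (z ^ q) + ℓ b := by
    rw [hab, pow_add, mul_assoc, inv_mul_cancel_left]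
    exact h.mul _ _
  set r := ℓ ((z ^ s)⁻¹ * a) with hrdef
  obtain ⟨i, hi, hi1, hi2⟩ : ∃ i ≤ n, ℓ (y ^ i) ≤ r ∧ r ≤ ℓ (y ^ i) + (E + D + ℓ y) := by
    by_cases hn : ℓ (y ^ n) ≤ r
    · exact ⟨n, le_rfl, hn, by omega⟩
    push Not at hn
    have hex : ∃ i, r < ℓ (y ^ i) := ⟨n, hn⟩
    classical
    have hpos : Nat.find hex ≠ 0 := by
      intro h0
      have := Nat.find_spec hex
      simp [h0, h.one] at this
    obtain ⟨i, hi⟩ := Nat.exists_eq_succ_of_ne_zero hpos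
    have h1 := Nat.find_spec hex
    have h2 := Nat.find_min hex (m := i) (by omega)
    have h3 := Nat.find_le (h := hex) hn
    have h4 := h.mul (y ^ i) y
    rw [hi, Nat.succ_eq_add_one, pow_succ] at h1
    exact ⟨i, by omega, by omega, by omega⟩
  refine ⟨i, ?_⟩
  obtain ⟨p, rfl⟩ := Nat.exists_eq_add_of_le hi
  have f := h.four (z ^ s) (a * y ^ (i + p)) (a * y ^ i) a
  have g1 : ℓ ((a * y ^ (i + p))⁻¹ * a) = ℓ (y ^ (i + p)) := by
    rw [h.mul_inv_comm, inv_mul_cancel_left]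
  have g2 : ℓ ((a * y ^ i)⁻¹ * a) = ℓ (y ^ i) := by
    rw [h.mul_inv_comm, inv_mul_cancel_left]
  have g3 : ℓ ((a * y ^ (i + p))⁻¹ * (a * y ^ i)) = ℓ (y ^ p) := by
    rw [h.mul_inv_comm, pow_add]
    congr 1
    group
  rw [g1, g2, g3, ← hrdef] at f
  have := hy.add i p
  have := h.mul (z ^ s)⁻¹ a
  omega

/-- A coset of one axis either has bounded projection to the other one, or is close to it. -/
theorem coset_dichotomy_aux (h : IsHyperbolicLength ℓ δ) (hz : IsAxis ℓ z D)
    (hy : IsAxis ℓ y D) (E : ℕ) :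
    ∃ K M : ℕ, ∀ (a b : G) (n j : ℕ), IsCosetMin ℓ z a → a * y ^ n = z ^ j * b →
      ℓ a + ℓ (z ^ j) + ℓ b ≤ ℓ (y ^ n) + E → ℓ (z ^ j) ≤ K ∨ ℓ a ≤ M := by
  classical
  set M₀ := E + 2 * D + 2 * δ + ℓ y with hM₀
  set N := (h.ball M₀).toFinset.card with hN
  refine ⟨N * ℓ z, M₀ + (2 * M₀ + N * ℓ z + D) * ℓ y, fun a b n j ha hab hfar => ?_⟩
  by_cases hj : j ≤ N
  · exact Or.inl (h.pow_le_of_le z hj)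
  right
  have hnear : ∀ s : ℕ, ∃ i : ℕ, s ≤ j → ℓ ((z ^ s)⁻¹ * (a * y ^ i)) ≤ M₀ := by
    intro s
    by_cases hs : s ≤ j
    · obtain ⟨i, hi⟩ := hz.exists_near h hy hab hfar hs
      exact ⟨i, fun _ => hi⟩
    · exact ⟨0, fun h' => absurd h' hs⟩
  choose i hi using hnear
  obtain ⟨s, hs, s', hs', hne, heq⟩ := Finset.exists_ne_map_eq_of_card_lt_of_maps_to
    (s := Finset.range (N + 1)) (t := (h.ball M₀).toFinset) (by simp [hN])
    (f := fun s => (z ^ s)⁻¹ * (a * y ^ i s)) (by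
      intro s hs
      have hs : s < N + 1 := by simpa using hs
      simpa using hi s (by omega))
  wlog hlt : s < s' generalizing s s'
  · exact this s' hs' s hs hne.symm heq.symm (by omega)
  obtain ⟨f, rfl⟩ := Nat.exists_eq_add_of_le hlt.le
  have hsN : s + f < N + 1 := by simpa using hs'
  have hb := hi s (by omega)
  set e : ℤ := (i (s + f) : ℤ) - i s with he
  have hcomm : a * y ^ e = z ^ f * a := by
    have h1 : a * y ^ i s = (z ^ f)⁻¹ * (a * y ^ i (s + f)) := by
      have h2 := congrArg (fun x => z ^ s * x) heq
      simp only [mul_inv_cancel_left] at h2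
      rw [h2, pow_add]
      group
    have h3 : z ^ f * (a * y ^ i s) = a * y ^ i (s + f) := by rw [h1, mul_inv_cancel_left]
    rw [he, zpow_sub, zpow_natCast, zpow_natCast, ← mul_assoc, ← h3]
    group
  have hcommq : ∀ q : ℤ, a * y ^ (e * q) = z ^ ((f : ℤ) * q) * a := by
    intro q
    have hs : SemiconjBy a (y ^ e) (z ^ f) := hcomm
    have := hs.zpow_right q
    rw [zpow_mul, zpow_mul, zpow_natCast]
    exact this
  have hf : 1 ≤ f := by omega
  have he0 : e ≠ 0 := by
    intro h0
    rw [h0, zpow_zero, mul_one, right_eq_mul] at hcomm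
    exact hz.pow_ne_one h hf hcomm
  set x := (z ^ s)⁻¹ * (a * y ^ i s) with hx
  have hxe : x * y ^ e = z ^ f * x := by
    have h1 : a * y ^ (i s : ℤ) * y ^ e = z ^ f * (a * y ^ (i s : ℤ)) := by
      rw [mul_assoc, ← zpow_add, add_comm, zpow_add, ← mul_assoc, hcomm, mul_assoc]
    rw [zpow_natCast] at h1
    rw [hx, mul_assoc, h1, ← mul_assoc, ((Commute.refl z).pow_pow s f).inv_left.eq, mul_assoc]
  have hebound : e.natAbs ≤ 2 * M₀ + N * ℓ z + D := by
    have h1 := hy.natAbs_le h e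
    have h2 := h.le_mul_left x (y ^ e)
    rw [hxe] at h2
    have h3 := h.mul (z ^ f) x
    have h4 : ℓ (z ^ f) ≤ N * ℓ z := h.pow_le_of_le z (by omega)
    omega
  have hdiv : a * y ^ i s = z ^ ((f : ℤ) * ((i s : ℤ) / e)) * (a * y ^ ((i s : ℤ) % e)) := by
    rw [← mul_assoc, ← hcommq, mul_assoc, ← zpow_add, Int.mul_ediv_add_emod, zpow_natCast]
  have hρ0 := Int.emod_nonneg (i s : ℤ) he0
  have hρ1 := Int.emod_lt (i s : ℤ) he0
  have hmin := ha (-(s : ℤ) + (f : ℤ) * ((i s : ℤ) / e))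
  have hkey : z ^ (-(s : ℤ) + (f : ℤ) * ((i s : ℤ) / e)) * a * y ^ ((i s : ℤ) % e) = x := by
    rw [hx, hdiv, zpow_add, zpow_neg, zpow_natCast]
    simp only [mul_assoc]
  have h5 := h.le_mul_right (z ^ (-(s : ℤ) + (f : ℤ) * ((i s : ℤ) / e)) * a)
    (y ^ ((i s : ℤ) % e))
  rw [hkey] at h5
  have h6 : ℓ (y ^ ((i s : ℤ) % e)) ≤ (2 * M₀ + N * ℓ z + D) * ℓ y := by
    rw [h.zpow_natAbs]
    exact h.pow_le_of_le y (by omega)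
  omega

/-- The coset `a ⟨z⟩` either projects to a bounded subset of `⟨z⟩`, or `a` is close to `⟨z⟩`. -/
theorem coset_dichotomy (h : IsHyperbolicLength ℓ δ) (hz : IsAxis ℓ z D) :
    ∃ K M : ℕ, ∀ (a b : G) (n j : ℤ), IsCosetMin ℓ z a → IsCosetMin ℓ z b →
      a * z ^ n = z ^ j * b → ℓ (z ^ j) ≤ K ∨ ℓ a ≤ M := by
  set E := 2 * ((2 * D + 2 * δ + 1) * ℓ z + 2 * δ) + 2 * δ with hE
  have hz' := hz.inv h
  obtain ⟨K₁, M₁, H₁⟩ := coset_dichotomy_aux h hz hz E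
  obtain ⟨K₂, M₂, H₂⟩ := coset_dichotomy_aux h hz hz' E
  obtain ⟨K₃, M₃, H₃⟩ := coset_dichotomy_aux h hz' hz E
  obtain ⟨K₄, M₄, H₄⟩ := coset_dichotomy_aux h hz' hz' E
  refine ⟨E + K₁ + K₂ + K₃ + K₄, M₁ + M₂ + M₃ + M₄, fun a b n j ha hb hab => ?_⟩
  rcases ha.contract h hz hb j with hc | hc
  · left; omega
  rw [← hab, inv_mul_cancel_left, ← hE] at hc
  obtain ⟨m, rfl | rfl⟩ := n.eq_nat_or_neg <;> obtain ⟨k, rfl | rfl⟩ := j.eq_nat_or_neg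
  · simp only [zpow_natCast] at *
    have := H₁ a b m k ha hab hc
    omega
  · simp only [zpow_neg, zpow_natCast, ← inv_pow] at *
    have := H₃ a b m k ha.inv hab hc
    omega
  · simp only [zpow_neg, zpow_natCast, ← inv_pow] at *
    have := H₂ a b m k ha hab hc
    omega
  · simp only [zpow_neg, zpow_natCast, ← inv_pow] at *
    have := H₄ a b m k ha.inv hab hc
    omega

/-- A path moving away from the axis linearly has sublinearly moving projection. -/
theorem path_projection_le (h : IsHyperbolicLength ℓ δ) (hz : IsAxis ℓ z D) (Λ lam B : ℕ) :
    ∃ K : ℕ, ∀ (T : ℕ) (p : ℕ → G),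
      (∀ t s, t + s ≤ T → ℓ ((p t)⁻¹ * p (t + s)) ≤ Λ * s) → p 0 = 1 →
      (∀ t ≤ T, ∀ k : ℤ, t ≤ lam * ℓ (z ^ k * p t)) →
      ∀ (i : ℤ) (a : G), p T = z ^ i * a → IsCosetMin ℓ z a → B * ℓ (z ^ i) ≤ K + T := by
  set E := 2 * ((2 * D + 2 * δ + 1) * ℓ z + 2 * δ) + 2 * δ with hE
  set S := B * E + 1 with hS
  set K₀ := 2 * (Λ * (lam * (Λ * S) + S)) with hK₀
  refine ⟨B * K₀, fun T p hstep h0 haway => ?_⟩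
  have key : ∀ t ≤ T, ∀ (i : ℤ) (a : G), p t = z ^ i * a → IsCosetMin ℓ z a →
      S * ℓ (z ^ i) ≤ S * K₀ + E * t := by
    intro t
    induction t using Nat.strong_induction_on with
    | _ t ih =>
      intro htT i a hp ha
      by_cases ht : t < lam * (Λ * S) + S
      · have h1 := hstep 0 t (by omega)
        rw [h0, inv_one, one_mul, zero_add] at h1
        have h2 := h.le_mul_right (z ^ i) a
        have h3 := ha i
        rw [← hp] at h2 h3
        have h4 : Λ * t ≤ Λ * (lam * (Λ * S) + S) := Nat.mul_le_mul_left _ ht.le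
        have h5 : ℓ (z ^ i) ≤ K₀ := by omega
        have := Nat.mul_le_mul_left S h5
        omega
      · obtain ⟨r, rfl⟩ : ∃ r, t = r + S := ⟨t - S, by omega⟩
        obtain ⟨i', a', hp', ha'⟩ := IsCosetMin.exists_decomp ℓ z (p r)
        have h1 := ih r (by omega) (by omega) i' a' hp' ha'
        have h2 := hstep r S htT
        have h3 := haway r (by omega) (-i')
        rw [hp', ← mul_assoc, ← zpow_add, neg_add_cancel, zpow_zero, one_mul] at h3
        have h4 : Λ * S ≤ ℓ a' := by
          by_contra hlt
          have : lam * ℓ a' ≤ lam * (Λ * S) := Nat.mul_le_mul_left _ (by omega)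
          have h6 : r = lam * (Λ * S) := by omega
          have h7 : lam * ℓ a' = lam * (Λ * S) := by omega
          rcases Nat.eq_zero_or_pos lam with hl | hl
          · have := haway (r + S) htT 0
            rw [hl] at this
            omega
          · have := Nat.eq_of_mul_eq_mul_left hl h7
            omega
        have h5 : (p r)⁻¹ * p (r + S) = a'⁻¹ * (z ^ (i - i') * a) := by
          rw [hp, hp', sub_eq_neg_add, zpow_add, zpow_neg]
          group
        have h6 : ℓ (z ^ (i - i')) ≤ E := by
          rcases ha'.contract h hz ha (i - i') with hc | hc
          · exact hc
          · rw [← h5] at hc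
            omega
        have h7 : ℓ (z ^ i) ≤ ℓ (z ^ i') + E := by
          have := h.mul (z ^ i') (z ^ (i - i'))
          rw [← zpow_add, add_sub_cancel] at this
          omega
        calc S * ℓ (z ^ i) ≤ S * (ℓ (z ^ i') + E) := Nat.mul_le_mul_left _ h7
          _ = S * ℓ (z ^ i') + E * S := by ring
          _ ≤ S * K₀ + E * r + E * S := by omega
          _ = S * K₀ + E * (r + S) := by ring
  intro i a hp ha
  have h1 := key T le_rfl i a hp ha
  have h2 : S * (B * ℓ (z ^ i)) ≤ S * (B * K₀ + T) := by
    calc S * (B * ℓ (z ^ i)) = B * (S * ℓ (z ^ i)) := by ring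
      _ ≤ B * (S * K₀ + E * T) := Nat.mul_le_mul_left _ h1
      _ = S * (B * K₀) + B * E * T := by ring
      _ ≤ S * (B * K₀) + S * T := by
        have : B * E * T ≤ S * T := Nat.mul_le_mul_right _ (by omega)
        omega
      _ = S * (B * K₀ + T) := by ring
  exact Nat.le_of_mul_le_mul_left h2 (by omega)

end IsAxis

end HyperbolicLength

section WordOver

variable {G : Type u} {X : Set G}

theorem IsWordOver.append {l₁ l₂ : List G} (h₁ : IsWordOver X l₁) (h₂ : IsWordOver X l₂) :
    IsWordOver X (l₁ ++ l₂) := fun x hx => (List.mem_append.1 hx).elim (h₁ x) (h₂ x)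

theorem IsWordOver.of_subset {l₁ l₂ : List G} (h : IsWordOver X l₁) (hsub : l₂ ⊆ l₁) :
    IsWordOver X l₂ := fun x hx => h x (hsub hx)

theorem subset_union_bool (X : Bool → Set G) (i : Bool) : X i ⊆ X true ∪ X false := by
  cases i
  exacts [Set.subset_union_right, Set.subset_union_left]

end WordOver

section WordLength

variable {G : Type u} [Group G] {X Y : Set G}

theorem IsWordOver.prod_mem {l : List G} (h : IsWordOver X l) :
    l.prod ∈ Subgroup.closure X :=
  Subgroup.list_prod_mem _ fun x hx => Subgroup.subset_closure (h x hx)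

theorem wordLength_prod_le {l : List G} (h : IsWordOver X l) :
    wordLength X l.prod ≤ l.length :=
  Nat.sInf_le ⟨l, rfl, h, rfl⟩

theorem exists_isGeodesicWord (hX : ∀ x ∈ X, x⁻¹ ∈ X) {g : G} (hg : g ∈ Subgroup.closure X) :
    ∃ l, IsGeodesicWord X l ∧ l.prod = g := by
  rw [← Subgroup.mem_toSubmonoid, Subgroup.closure_toSubmonoid] at hg
  obtain ⟨l, hl, hprod⟩ := Submonoid.exists_list_of_mem_closure hg
  have hne : {n : ℕ | ∃ l : List G, l.length = n ∧ (∀ x ∈ l, x ∈ X) ∧ l.prod = g}.Nonempty :=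
    ⟨l.length, l, rfl, fun x hx => (hl x hx).elim id fun h => by simpa using hX _ h, hprod⟩
  obtain ⟨l', h1, h2, h3⟩ := Nat.sInf_mem hne
  refine ⟨l', ⟨h2, ?_⟩, h3⟩
  rw [h1, h3]
  rfl

theorem wordLength_one : wordLength X (1 : G) = 0 := by
  have : wordLength X ([] : List G).prod ≤ 0 := wordLength_prod_le (by simp [IsWordOver])
  simpa using this

theorem eq_one_of_wordLength_eq_zero (hX : ∀ x ∈ X, x⁻¹ ∈ X) {g : G}
    (hg : g ∈ Subgroup.closure X) (h0 : wordLength X g = 0) : g = 1 := by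
  obtain ⟨l, ⟨-, hl⟩, rfl⟩ := exists_isGeodesicWord hX hg
  rw [h0, List.length_eq_zero_iff] at hl
  simp [hl]

theorem wordLength_mul_le (hX : ∀ x ∈ X, x⁻¹ ∈ X) {g h : G} (hg : g ∈ Subgroup.closure X)
    (hh : h ∈ Subgroup.closure X) : wordLength X (g * h) ≤ wordLength X g + wordLength X h := by
  obtain ⟨l, ⟨hl, hl'⟩, rfl⟩ := exists_isGeodesicWord hX hg
  obtain ⟨m, ⟨hm, hm'⟩, rfl⟩ := exists_isGeodesicWord hX hh
  have := wordLength_prod_le (hl.append hm)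
  rw [List.prod_append, List.length_append] at this
  omega

theorem wordLength_inv_le (hX : ∀ x ∈ X, x⁻¹ ∈ X) {g : G} (hg : g ∈ Subgroup.closure X) :
    wordLength X g⁻¹ ≤ wordLength X g := by
  obtain ⟨l, ⟨hl, hl'⟩, rfl⟩ := exists_isGeodesicWord hX hg
  have : IsWordOver X (l.map fun x => x⁻¹).reverse := by
    intro x hx
    simp only [List.mem_reverse, List.mem_map] at hx
    obtain ⟨y, hy, rfl⟩ := hx
    exact hX y (hl y hy)
  have h2 := wordLength_prod_le this
  rw [← List.prod_inv_reverse] at h2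
  simpa [hl'] using h2

theorem wordLength_inv (hX : ∀ x ∈ X, x⁻¹ ∈ X) {g : G} (hg : g ∈ Subgroup.closure X) :
    wordLength X g⁻¹ = wordLength X g := by
  refine le_antisymm (wordLength_inv_le hX hg) ?_
  simpa using wordLength_inv_le hX (inv_mem hg)

theorem wordLength_pow_le (hX : ∀ x ∈ X, x⁻¹ ∈ X) {g : G} (hg : g ∈ Subgroup.closure X) (n : ℕ) :
    wordLength X (g ^ n) ≤ n * wordLength X g := by
  induction n with
  | zero => simp [wordLength_one]
  | succ n ih =>
    have := wordLength_mul_le hX (pow_mem hg n) hg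
    rw [pow_succ]
    linarith

theorem wordLength_zpow_le (hX : ∀ x ∈ X, x⁻¹ ∈ X) {g : G} (hg : g ∈ Subgroup.closure X) (n : ℤ) :
    wordLength X (g ^ n) ≤ n.natAbs * wordLength X g := by
  obtain ⟨m, rfl | rfl⟩ := n.eq_nat_or_neg
  · simpa using wordLength_pow_le hX hg m
  · rw [zpow_neg, wordLength_inv hX (zpow_mem hg _)]
    simpa using wordLength_pow_le hX hg m

theorem wordLength_anti (hX : ∀ x ∈ X, x⁻¹ ∈ X) (hXY : X ⊆ Y) {g : G}
    (hg : g ∈ Subgroup.closure X) : wordLength Y g ≤ wordLength X g := by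
  obtain ⟨l, ⟨hl, hl'⟩, rfl⟩ := exists_isGeodesicWord hX hg
  rw [← hl']
  exact wordLength_prod_le fun x hx => hXY (hl x hx)

theorem exists_wordLength_le_mul (hXfin : X.Finite) (hX : ∀ x ∈ X, x⁻¹ ∈ X)
    (hY : ∀ x ∈ Y, x⁻¹ ∈ Y) (hXY : X ⊆ Subgroup.closure Y) :
    ∃ Λ : ℕ, ∀ g ∈ Subgroup.closure X, wordLength Y g ≤ Λ * wordLength X g := by
  obtain ⟨Λ, hΛ⟩ := (hXfin.image (wordLength Y)).bddAbove
  refine ⟨Λ, fun g hg => ?_⟩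
  obtain ⟨l, ⟨hl, hl'⟩, rfl⟩ := exists_isGeodesicWord hX hg
  rw [← hl']
  clear hl' hg
  induction l with
  | nil => simp [wordLength_one]
  | cons a l ih =>
    have ha : a ∈ X := hl a (by simp)
    have hl2 : IsWordOver X l := hl.of_subset (List.subset_cons_self a l)
    have h1 := wordLength_mul_le hY (hXY ha)
      (Subgroup.list_prod_mem _ fun x hx => hXY (hl2 x hx))
    have h2 := ih hl2
    have h3 : wordLength Y a ≤ Λ := hΛ ⟨a, ha, rfl⟩
    rw [List.prod_cons, List.length_cons]
    linarith

theorem finite_wordLength_le (hXfin : X.Finite) (hX : ∀ x ∈ X, x⁻¹ ∈ X) (n : ℕ) :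
    {g | g ∈ Subgroup.closure X ∧ wordLength X g ≤ n}.Finite := by
  suffices {g : G | ∃ l : List G, l.length ≤ n ∧ IsWordOver X l ∧ l.prod = g}.Finite by
    refine this.subset fun g hg => ?_
    obtain ⟨l, ⟨hl, hl'⟩, h⟩ := exists_isGeodesicWord hX hg.1
    exact ⟨l, by rw [hl', h]; exact hg.2, hl, h⟩
  induction n with
  | zero =>
    refine (Set.finite_singleton (1 : G)).subset ?_
    rintro g ⟨l, hl, -, rfl⟩
    simp [List.length_eq_zero_iff.1 (Nat.le_zero.1 hl)]
  | succ n ih =>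
    refine ((Set.finite_singleton (1 : G)).union (Set.Finite.image2 (· * ·) hXfin ih)).subset ?_
    rintro g ⟨l, hl, hlX, rfl⟩
    cases l with
    | nil => simp
    | cons a l =>
      refine Or.inr ⟨a, hlX a (by simp), l.prod, ⟨l, ?_, ?_, rfl⟩, by simp⟩
      · simpa using hl
      · exact hlX.of_subset (List.subset_cons_self a l)

theorem IsGeodesicWord.of_infix (hX : ∀ x ∈ X, x⁻¹ ∈ X) {u v : List G} (hu : IsGeodesicWord X u)
    (hv : v <:+: u) : IsGeodesicWord X v := by
  obtain ⟨p, q, rfl⟩ := hv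
  obtain ⟨hw, hlen⟩ := hu
  have hp : IsWordOver X p := hw.of_subset (by simp)
  have hq : IsWordOver X q := hw.of_subset (by simp)
  have hv : IsWordOver X v := hw.of_subset fun x hx => by simp [hx]
  refine ⟨hv, le_antisymm ?_ (wordLength_prod_le hv)⟩
  have h1 := wordLength_mul_le hX (mul_mem hp.prod_mem hv.prod_mem) hq.prod_mem
  have h2 := wordLength_mul_le hX hp.prod_mem hv.prod_mem
  have h3 := wordLength_prod_le hp
  have h4 := wordLength_prod_le hq
  simp only [List.prod_append, List.length_append] at hlen
  omega

/-- Word hyperbolicity yields a hyperbolic length function. -/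
theorem IsWordHyperbolic.exists_isHyperbolicLength (hG : IsWordHyperbolic G) :
    ∃ Y : Set G, IsSymmGen Y ∧ ∃ δ : ℕ, IsHyperbolicLength (wordLength Y) δ := by
  obtain ⟨Y, ⟨hfin, hinv, hgen⟩, δ, -, hδ⟩ := hG
  have hmem : ∀ g : G, g ∈ Subgroup.closure Y := fun g => hgen ▸ Subgroup.mem_top g
  refine ⟨Y, ⟨hfin, hinv, hgen⟩, ⌈δ⌉₊, ⟨wordLength_one, fun g => wordLength_inv hinv (hmem g),
    fun g h => wordLength_mul_le hinv (hmem g) (hmem h), fun x y z w => ?_, fun n => ?_,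
    fun g r hr => ?_⟩⟩
  · have h1 := hδ x y z w
    have h2 := Nat.le_ceil δ
    simp only [gromovProd, wordDist] at h1
    have h3 : wordLength Y (z⁻¹ * y) = wordLength Y (y⁻¹ * z) := by
      rw [← wordLength_inv hinv (hmem (z⁻¹ * y))]; simp
    rcases min_cases
      (((wordLength Y (x⁻¹ * w) : ℝ) + wordLength Y (y⁻¹ * w) - wordLength Y (x⁻¹ * y)) / 2)
      (((wordLength Y (y⁻¹ * w) : ℝ) + wordLength Y (z⁻¹ * w) - wordLength Y (y⁻¹ * z)) / 2)
      with ⟨h4, -⟩ | ⟨h4, -⟩ <;> rw [h4] at h1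
    · left
      have : (wordLength Y (x⁻¹ * z) : ℝ) + wordLength Y (y⁻¹ * w) ≤
          wordLength Y (x⁻¹ * y) + wordLength Y (z⁻¹ * w) + 2 * ⌈δ⌉₊ := by linarith
      exact_mod_cast this
    · right
      have : (wordLength Y (x⁻¹ * z) : ℝ) + wordLength Y (y⁻¹ * w) ≤
          wordLength Y (y⁻¹ * z) + wordLength Y (x⁻¹ * w) + 2 * ⌈δ⌉₊ := by linarith
      exact_mod_cast this
  · exact (finite_wordLength_le hfin hinv n).subset fun g hg => ⟨hmem g, hg⟩
  · obtain ⟨l, hl, rfl⟩ := exists_isGeodesicWord hinv (hmem g)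
    have h1 := hl.of_infix hinv (List.take_prefix r l).isInfix
    have h2 := hl.of_infix hinv (List.drop_suffix r l).isInfix
    have h3 : (l.take r).prod⁻¹ * l.prod = (l.drop r).prod := by
      rw [inv_mul_eq_iff_eq_mul, List.prod_take_mul_prod_drop]
    have h4 := hl.2
    refine ⟨(l.take r).prod, ?_, ?_⟩
    · rw [← h1.2, List.length_take]; omega
    · rw [h3, ← h2.2, List.length_drop]; omega

end WordLength

section VirtuallyCyclic

variable {G : Type u} [Group G] {ℓ : G → ℕ} {δ : ℕ} {A C : Subgroup G} {X : Set G}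

/-- A virtually cyclic subgroup is finite or finitely covered by translates of an axis. -/
theorem IsVirtuallyCyclic.finite_or_exists_axis (hC : IsVirtuallyCyclic ↥C)
    (h : IsHyperbolicLength ℓ δ) :
    (C : Set G).Finite ∨ ∃ z ∈ C, ∃ D, IsAxis ℓ z D ∧
      ∃ F : Set G, F.Finite ∧ F ⊆ C ∧ ∀ c ∈ C, ∃ n : ℤ, ∃ f ∈ F, c = z ^ n * f := by
  obtain ⟨Z, ⟨⟨z₀, hz₀⟩⟩, hfin⟩ := hC
  let z : G := ((z₀ : ↥C) : G)
  let R : Set G := Set.range fun q : ↥C ⧸ Z => (((q.out : ↥C) : G))⁻¹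
  have hRfin : R.Finite := Set.finite_range _
  have hRC : R ⊆ C := by
    rintro _ ⟨q, rfl⟩
    exact inv_mem q.out.2
  have hdecomp : ∀ c ∈ C, ∃ n : ℤ, ∃ f ∈ R, c = z ^ n * f := by
    intro c hc
    obtain ⟨y, hy⟩ := QuotientGroup.mk_out_eq_mul Z (⟨c, hc⟩ : ↥C)⁻¹
    obtain ⟨n, hn⟩ := hz₀ y
    refine ⟨n, _, ⟨QuotientGroup.mk (⟨c, hc⟩ : ↥C)⁻¹, rfl⟩, ?_⟩
    have hy2 : (y : ↥C) = (z₀ : ↥C) ^ n := by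
      rw [← hn]; simp
    have : ((QuotientGroup.mk (s := Z) (⟨c, hc⟩ : ↥C)⁻¹).out : ↥C) =
        (⟨c, hc⟩ : ↥C)⁻¹ * (z₀ : ↥C) ^ n := by rw [hy, hy2]
    simp only [this]
    simp [z]
  by_cases hord : ∀ n : ℕ, 1 ≤ n → z ^ n ≠ 1
  · right
    obtain ⟨k, D, hk, hax⟩ := h.exists_axis hord
    refine ⟨z ^ k, pow_mem (z₀ : ↥C).2 k, D, hax,
      Set.image2 (fun (r : ℕ) f => z ^ r * f) (Set.Iio k) R, ?_, ?_, ?_⟩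
    · exact Set.Finite.image2 _ (Set.finite_Iio k) hRfin
    · rintro _ ⟨r, -, f, hf, rfl⟩
      exact mul_mem (pow_mem (z₀ : ↥C).2 r) (hRC hf)
    · intro c hc
      obtain ⟨n, f, hf, rfl⟩ := hdecomp c hc
      have h1 := Int.emod_nonneg n (b := (k : ℤ)) (by omega)
      have h2 := Int.emod_lt_of_pos n (b := (k : ℤ)) (by omega)
      refine ⟨n / k, _, ⟨(n % k).toNat, ?_, f, hf, rfl⟩, ?_⟩
      · simp only [Set.mem_Iio]; omega
      · rw [← mul_assoc, ← zpow_natCast z k, ← zpow_natCast z (n % k).toNat, ← zpow_mul,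
          ← zpow_add, Int.toNat_of_nonneg h1, Int.mul_ediv_add_emod]
  · left
    push Not at hord
    obtain ⟨k, hk, hzk⟩ := hord
    refine (Set.Finite.image2 (fun (r : ℕ) f => z ^ r * f) (Set.finite_Iio k) hRfin).subset ?_
    intro c hc
    obtain ⟨n, f, hf, rfl⟩ := hdecomp c hc
    have h1 := Int.emod_nonneg n (b := (k : ℤ)) (by omega)
    have h2 := Int.emod_lt_of_pos n (b := (k : ℤ)) (by omega)
    refine ⟨(n % k).toNat, ?_, f, hf, ?_⟩
    · simp only [Set.mem_Iio]; omega
    · simp only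
      congr 1
      conv_rhs => rw [← Int.mul_ediv_add_emod n k, zpow_add, zpow_mul, zpow_natCast, hzk, one_zpow,
        one_mul]
      rw [← zpow_natCast, Int.toNat_of_nonneg h1]

/-- Virtually cyclic subgroups of hyperbolic groups are undistorted. -/
theorem IsVirtuallyCyclic.undistorted (hC : IsVirtuallyCyclic ↥C)
    (h : IsHyperbolicLength ℓ δ) (hℓ : ∀ g, ℓ g = 0 → g = 1) {S : Set G}
    (hS : ∀ x ∈ S, x⁻¹ ∈ S) (hgen : Subgroup.closure S = C) :
    ∃ lam : ℕ, ∀ c ∈ C, wordLength S c ≤ lam * ℓ c := by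
  suffices ∃ lam : ℕ, ∀ c ∈ C, wordLength S c ≤ lam * ℓ c + lam by
    obtain ⟨lam, hlam⟩ := this
    refine ⟨2 * lam, fun c hc => ?_⟩
    rcases Nat.eq_zero_or_pos (ℓ c) with h0 | h0
    · rw [hℓ c h0, wordLength_one]; exact Nat.zero_le _
    · have := hlam c hc
      nlinarith
  rcases hC.finite_or_exists_axis h with hfin | ⟨z, hzC, D, hz, F, hF, hFC, hdec⟩
  · obtain ⟨B, hB⟩ := (hfin.image (wordLength S)).bddAbove
    refine ⟨B, fun c hc => ?_⟩
    have : wordLength S c ≤ B := hB ⟨c, hc, rfl⟩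
    nlinarith
  · obtain ⟨B, hB⟩ := (hF.image (wordLength S)).bddAbove
    obtain ⟨B', hB'⟩ := (hF.image ℓ).bddAbove
    refine ⟨wordLength S z * (1 + B' + D) + B, fun c hc => ?_⟩
    obtain ⟨n, f, hf, rfl⟩ := hdec c hc
    have h1 : wordLength S f ≤ B := hB ⟨f, hf, rfl⟩
    have h2 : ℓ f ≤ B' := hB' ⟨f, hf, rfl⟩
    have h3 := hz.natAbs_le h n
    have h4 := h.le_mul_right (z ^ n) f
    have h5 := wordLength_mul_le hS (hgen ▸ zpow_mem hzC n) (hgen ▸ hFC hf : f ∈ _)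
    have h6 := wordLength_zpow_le hS (hgen ▸ hzC) n
    have h7 : n.natAbs * wordLength S z ≤ (ℓ (z ^ n * f) + B' + D) * wordLength S z :=
      Nat.mul_le_mul_right _ (by omega)
    calc _ ≤ (ℓ (z ^ n * f) + B' + D) * wordLength S z + B := by omega
      _ ≤ _ := by
        have : 0 ≤ wordLength S z * (B' + D) * ℓ (z ^ n * f) + B * ℓ (z ^ n * f)
          + wordLength S z := Nat.zero_le _
        nlinarith

/-- The projection to an axis in `C` of a coset-shortest element is sublinear. -/
theorem IsAxis.shortest_projection_le {z : G} {D : ℕ} (h : IsHyperbolicLength ℓ δ)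
    (hz : IsAxis ℓ z D) (hzC : z ∈ C) (hCA : C ≤ A) (hX : ∀ x ∈ X, x⁻¹ ∈ X)
    (hgen : Subgroup.closure X = A) {Λ lam : ℕ} (hΛ : ∀ a ∈ A, ℓ a ≤ Λ * wordLength X a)
    (hlam : ∀ a ∈ A, wordLength X a ≤ lam * ℓ a) (B : ℕ) :
    ∃ K : ℕ, ∀ a ∈ A, ShortestIn X a {x | ∃ c ∈ C, x = c * a} →
      ∀ (i : ℤ) (a' : G), a = z ^ i * a' → IsCosetMin ℓ z a' →
        B * ℓ (z ^ i) ≤ K + wordLength X a := by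
  obtain ⟨K, hK⟩ := hz.path_projection_le h Λ lam B
  refine ⟨K, fun a ha hshort i a' haa' ha' => ?_⟩
  obtain ⟨l, hl, rfl⟩ := exists_isGeodesicWord hX (hgen ▸ ha : a ∈ _)
  have hmem : ∀ v, v <:+: l → v.prod ∈ Subgroup.closure X := fun v hv =>
    (hl.of_infix hX hv).1.prod_mem
  rw [← hl.2]
  refine hK l.length (fun t => (l.take t).prod) (fun t s hts => ?_) (by simp) (fun t ht k => ?_)
    i a' (by simpa using haa') ha'
  · have h1 : (l.take t).prod⁻¹ * (l.take (t + s)).prod = ((l.drop t).take s).prod := by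
      rw [List.take_add, List.prod_append, inv_mul_cancel_left]
    have hin : (l.drop t).take s <:+: l :=
      (List.take_prefix s _).isInfix.trans (List.drop_suffix t l).isInfix
    have h2 := (hl.of_infix hX hin).2
    rw [h1]
    refine (hΛ _ (hgen ▸ hmem _ hin)).trans (Nat.mul_le_mul_left _ ?_)
    rw [← h2, List.length_take]
    omega
  · have hpre := hmem _ (List.take_prefix t l).isInfix
    have hsuf := hmem _ (List.drop_suffix t l).isInfix
    have hzk : z ^ k ∈ Subgroup.closure X := hgen ▸ hCA (zpow_mem hzC k)
    have h1 := hshort.2 (z ^ k * l.prod) ⟨z ^ k, zpow_mem hzC k, rfl⟩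
    have h2 := wordLength_mul_le hX (mul_mem hzk hpre) hsuf
    rw [mul_assoc, List.prod_take_mul_prod_drop] at h2
    have h3 := wordLength_prod_le (hl.of_infix hX (List.drop_suffix t l).isInfix).1
    have h4 := hlam _ (hgen ▸ mul_mem hzk hpre)
    have h5 := hl.2
    rw [List.length_drop] at h3
    omega

/-- Key estimate for replacing a coset-shortest syllable `a` by `c * a * c'⁻¹`. -/
theorem IsVirtuallyCyclic.syllable_bound (hC : IsVirtuallyCyclic ↥C)
    (h : IsHyperbolicLength ℓ δ) (hCA : C ≤ A) (hX : ∀ x ∈ X, x⁻¹ ∈ X)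
    (hgen : Subgroup.closure X = A) {Λ lam : ℕ} (hΛ : ∀ a ∈ A, ℓ a ≤ Λ * wordLength X a)
    (hlam : ∀ a ∈ A, wordLength X a ≤ lam * ℓ a) :
    ∃ K : ℕ, ∀ a ∈ A, ShortestIn X a {x | ∃ c ∈ C, x = c * a} → ∀ c ∈ C, ∀ c' ∈ C,
      2 * lam * ℓ c + wordLength X a ≤ K * ℓ (c * a * c'⁻¹) + K + 2 * lam * ℓ c' := by
  have hshift : ∀ a ∈ A, ShortestIn X a {x | ∃ c ∈ C, x = c * a} → ∀ c ∈ C, ∀ c' ∈ C,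
      wordLength X a ≤ lam * ℓ (c * a * c'⁻¹) + lam * ℓ c' := by
    intro a ha hshort c hc c' hc'
    have h1 := hshort.2 (c * a) ⟨c, hc, rfl⟩
    have h2 := hlam (c * a) (mul_mem (hCA hc) ha)
    have h3 := h.mul (c * a * c'⁻¹) c'
    rw [inv_mul_cancel_right] at h3
    have h4 := Nat.mul_le_mul_left lam h3
    rw [mul_add] at h4
    omega
  rcases hC.finite_or_exists_axis h with hfin | ⟨z, hzC, D, hz, F, hF, hFC, hdec⟩
  · obtain ⟨B, hB⟩ := (hfin.image ℓ).bddAbove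
    refine ⟨2 * lam * B + lam, fun a ha hshort c hc c' hc' => ?_⟩
    have h1 := hshift a ha hshort c hc c' hc'
    have h2 : ℓ c ≤ B := hB ⟨c, hc, rfl⟩
    have h3 := Nat.mul_le_mul_left (2 * lam) h2
    have h4 := Nat.zero_le (2 * lam * B * ℓ (c * a * c'⁻¹))
    nlinarith
  obtain ⟨B, hB⟩ := (hF.image ℓ).bddAbove
  obtain ⟨K₁, M, hdich⟩ := hz.coset_dichotomy h
  obtain ⟨K₂, hproj⟩ := hz.shortest_projection_le h hzC hCA hX hgen hΛ hlam (2 * lam)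
  refine ⟨6 * lam + 2 * lam * (5 * B + K₁) + K₂ + (2 * lam * (Λ * (lam * M)) + lam * M),
    fun a ha hshort c hc c' hc' => ?_⟩
  obtain ⟨i, a', haa', ha'⟩ := IsCosetMin.exists_decomp ℓ z a
  obtain ⟨p, f, hf, hpf⟩ := hdec c⁻¹ (inv_mem hc)
  obtain ⟨n, f', hf', hnf⟩ := hdec c'⁻¹ (inv_mem hc')
  obtain ⟨j, b, hjb, hb⟩ := IsCosetMin.exists_decomp ℓ z (a' * z ^ n)
  have hfB : ℓ f ≤ B := hB ⟨f, hf, rfl⟩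
  have hfB' : ℓ f' ≤ B := hB ⟨f', hf', rfl⟩
  have hcf : c = f⁻¹ * z ^ (-p) := by
    rw [← inv_inv c, hpf, mul_inv_rev, zpow_neg]
  have hw : c * a * c'⁻¹ = f⁻¹ * (z ^ (-p + i + j) * b) * f' := by
    rw [hnf, hcf, haa', zpow_add, zpow_add, mul_assoc _ (z ^ j) b, ← hjb]
    group
  have hs := hshift a ha hshort c hc c' hc'
  set W := ℓ (c * a * c'⁻¹) with hW
  rcases hdich a' b n j ha' hb hjb with hK | hM
  · have h1 : ℓ (z ^ (-p + i + j) * b) ≤ W + 2 * B := by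
      have e1 := h.le_mul_right (f⁻¹ * (z ^ (-p + i + j) * b)) f'
      have e2 := h.le_mul_left f⁻¹ (z ^ (-p + i + j) * b)
      rw [← hw] at e1
      rw [h.inv] at e2
      omega
    have h2 := hb (-p + i + j)
    have h3 := h.le_mul_right (z ^ (-p + i + j)) b
    have h4 : ℓ (z ^ (-p)) ≤ ℓ (z ^ (-p + i + j)) + ℓ (z ^ i) + ℓ (z ^ j) := by
      have e1 := h.le_mul_right (z ^ (-p)) (z ^ i)
      have e2 := h.le_mul_right (z ^ (-p + i)) (z ^ j)
      rw [← zpow_add] at e1 e2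
      omega
    have h5 := h.mul f⁻¹ (z ^ (-p))
    rw [← hcf, h.inv] at h5
    have h6 : ℓ c ≤ 2 * W + (5 * B + K₁) + ℓ (z ^ i) := by omega
    have h7 := hproj a ha hshort i a' haa' ha'
    have h8 := Nat.mul_le_mul_left (2 * lam) h6
    have h9 := Nat.zero_le ((2 * lam * (5 * B + K₁) + K₂ +
      (2 * lam * (Λ * (lam * M)) + lam * M)) * W)
    have h10 := Nat.zero_le (2 * lam * (Λ * (lam * M)) + lam * M + 6 * lam)
    nlinarith
  · have h1 : wordLength X a ≤ lam * M := by
      have e0 : a' = z ^ (-i) * a := by rw [haa', zpow_neg, inv_mul_cancel_left]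
      have e1 := hshort.2 a' ⟨z ^ (-i), zpow_mem hzC _, e0⟩
      have e2 := hlam a' (e0 ▸ mul_mem (hCA (zpow_mem hzC _)) ha)
      exact e1.trans (e2.trans (Nat.mul_le_mul_left _ hM))
    have h2 : ℓ a ≤ Λ * (lam * M) := (hΛ a ha).trans (Nat.mul_le_mul_left _ h1)
    have h3 : ℓ c ≤ W + ℓ c' + ℓ a := by
      have e1 := h.le_mul_right c a
      have e2 := h.le_mul_right (c * a) c'⁻¹
      rw [h.inv] at e2
      omega
    have h4 : ℓ c ≤ W + ℓ c' + Λ * (lam * M) := by omega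
    have h5 := Nat.mul_le_mul_left (2 * lam) h4
    have h9 := Nat.zero_le ((4 * lam + 2 * lam * (5 * B + K₁) + K₂ +
      (2 * lam * (Λ * (lam * M)) + lam * M)) * W)
    nlinarith

end VirtuallyCyclic

section Amalgam

variable {G : Type u} [Group G] {A : Bool → Subgroup G} {C : Subgroup G}

/-- `IsReducedProd A C i g`: `g` is a nonempty alternating product of elements of the two
factors lying outside `C`, with first syllable in `A i`. -/
inductive IsReducedProd (A : Bool → Subgroup G) (C : Subgroup G) : Bool → G → Prop
  | single {i : Bool} {b : G} : b ∈ A i → b ∉ C → IsReducedProd A C i b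
  | cons {i : Bool} {b p : G} :
      b ∈ A i → b ∉ C → IsReducedProd A C (!i) p → IsReducedProd A C i (b * p)

theorem IsAmalgamatedFreeProduct.le (amal : IsAmalgamatedFreeProduct (A true) (A false) C)
    (i : Bool) : C ≤ A i := by
  cases i
  exacts [amal.le_right, amal.le_left]

theorem IsAmalgamatedFreeProduct.mem_of_mem_of_mem_not
    (amal : IsAmalgamatedFreeProduct (A true) (A false) C) {i : Bool} {g : G} (h : g ∈ A i)
    (h' : g ∈ A (!i)) : g ∈ C := by
  rw [← amal.inf_eq]
  cases i
  exacts [⟨h', h⟩, ⟨h, h'⟩]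

/-- Normal form theorem: a reduced product does not lie in the amalgamated subgroup. -/
theorem IsReducedProd.notMem (amal : IsAmalgamatedFreeProduct (A true) (A false) C) {i : Bool}
    {g : G} (hg : IsReducedProd A C i g) : g ∉ C := by
  let φ : ∀ i, ↥C →* ↥(A i) := fun i => Subgroup.inclusion (amal.le i)
  have hφ : ∀ i, Function.Injective (φ i) := fun i => Subgroup.inclusion_injective _
  obtain ⟨f, hf₁, hf₂⟩ := amal.univ (Monoid.PushoutI φ) (Monoid.PushoutI.of (φ := φ) true)
    (Monoid.PushoutI.of (φ := φ) false) fun c hA hB => by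
      have hc : c ∈ C := amal.inf_eq ▸ ⟨hA, hB⟩
      exact (Monoid.PushoutI.of_apply_eq_base φ true ⟨c, hc⟩).trans
        (Monoid.PushoutI.of_apply_eq_base φ false ⟨c, hc⟩).symm
  have hf : ∀ i (a : ↥(A i)), f a = Monoid.PushoutI.of (φ := φ) i a := by
    rintro (_ | _) a
    exacts [hf₂ a, hf₁ a]
  have hrange : ∀ (i : Bool) (b : ↥(A i)), (b : G) ∉ C → b ∉ (φ i).range := by
    rintro i b hb ⟨c, rfl⟩
    exact hb c.2
  have hne : ∀ (i : Bool) (b : ↥(A i)), (b : G) ∉ C → b ≠ 1 := by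
    rintro i b hb rfl
    exact hb (one_mem C)
  have hword : ∃ w : Monoid.CoprodI.Word fun i => ↥(A i), w.fstIdx = some i ∧
      Monoid.PushoutI.Reduced φ w ∧ Monoid.PushoutI.ofCoprodI w.prod = f g := by
    induction hg with
    | @single i b hb hbC =>
      have h1 := hne i ⟨b, hb⟩ hbC
      refine ⟨.cons ⟨b, hb⟩ .empty (by simp [Monoid.CoprodI.Word.fstIdx]) h1, by simp, ?_, ?_⟩
      · intro x hx
        simp only [Monoid.CoprodI.Word.cons_toList, Monoid.CoprodI.Word.empty,
          List.mem_singleton] at hx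
        subst hx
        exact hrange i _ hbC
      · simpa using (hf i ⟨b, hb⟩).symm
    | @cons i b p hb hbC _ ih =>
      obtain ⟨w, hw, hred, hprod⟩ := ih
      have h1 := hne i ⟨b, hb⟩ hbC
      refine ⟨.cons ⟨b, hb⟩ w (by simp [hw]) h1, by simp, ?_, ?_⟩
      · intro x hx
        simp only [Monoid.CoprodI.Word.cons_toList, List.mem_cons] at hx
        rcases hx with rfl | hx
        · exact hrange i _ hbC
        · exact hred x hx
      · simp [hprod, ← hf i ⟨b, hb⟩]
  intro hgC
  obtain ⟨w, hw, hred, hprod⟩ := hword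
  have hempty := hred.eq_empty_of_mem_range hφ (by
    rw [hprod]
    refine ⟨⟨g, hgC⟩, ?_⟩
    rw [← Monoid.PushoutI.of_apply_eq_base φ true, ← hf]
    rfl)
  rw [hempty] at hw
  simp [Monoid.CoprodI.Word.fstIdx] at hw

theorem IsReducedProd.notMem_not (amal : IsAmalgamatedFreeProduct (A true) (A false) C) {i : Bool}
    {g : G} (hg : IsReducedProd A C i g) : g ∉ A (!i) := by
  intro hgA
  have hgC := hg.notMem amal
  have h : IsReducedProd A C (!i) (g⁻¹ * g) :=
    .cons (inv_mem hgA) (fun h => hgC (by simpa using h)) (by simpa using hg)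
  exact h.notMem amal (by simp)

theorem IsReducedProd.mul_right (amal : IsAmalgamatedFreeProduct (A true) (A false) C) {i k : Bool}
    {g y : G} (hg : IsReducedProd A C i g) (hy : y ∈ A k) :
    IsReducedProd A C i (g * y) ∨ (g * y ∈ C ∧ y ∈ A i) := by
  induction hg with
  | @single i b hb hbC =>
    by_cases hyi : y ∈ A i
    · by_cases hby : b * y ∈ C
      · exact Or.inr ⟨hby, hyi⟩
      · exact Or.inl (.single (mul_mem hb hyi) hby)
    · have hk : k = !i := Bool.eq_not_of_ne fun h => hyi (h ▸ hy)
      exact Or.inl (.cons hb hbC (.single (hk ▸ hy) fun h => hyi (amal.le i h)))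
  | @cons i b p hb hbC _ ih =>
    left
    rw [mul_assoc]
    rcases ih with ih | ⟨ih, -⟩
    · exact .cons hb hbC ih
    · exact .single (mul_mem hb (amal.le i ih)) fun h => hbC ((mul_mem_cancel_right ih).1 h)

theorem IsAmalgamatedFreeProduct.mem_or_isReducedProd
    (amal : IsAmalgamatedFreeProduct (A true) (A false) C) (g : G) :
    g ∈ C ∨ ∃ i, IsReducedProd A C i g := by
  have hstep : ∀ (g y : G) (k : Bool), (g ∈ C ∨ ∃ i, IsReducedProd A C i g) → y ∈ A k →
      (g * y ∈ C ∨ ∃ i, IsReducedProd A C i (g * y)) := by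
    rintro g y k (hg | ⟨i, hg⟩) hy
    · by_cases hgy : g * y ∈ C
      · exact Or.inl hgy
      · exact Or.inr ⟨k, .single (mul_mem (amal.le k hg) hy) hgy⟩
    · rcases hg.mul_right amal hy with h | ⟨h, -⟩
      · exact Or.inr ⟨i, h⟩
      · exact Or.inl h
  have hmem : g ∈ Subgroup.closure ((A true : Set G) ∪ A false) := by
    rw [← Subgroup.sup_eq_closure, amal.sup_eq_top]
    exact Subgroup.mem_top g
  induction hmem using Subgroup.closure_induction_right with
  | one => exact Or.inl (one_mem C)
  | mul_right x _ y hy ih =>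
    rcases hy with hy | hy
    · exact hstep x y true ih hy
    · exact hstep x y false ih hy
  | mul_inv_cancel x _ y hy ih =>
    rcases hy with hy | hy
    · exact hstep x y⁻¹ true ih (inv_mem hy)
    · exact hstep x y⁻¹ false ih (inv_mem hy)

/-- A path leading into the set of reduced products with first syllable in `A i` passes
through `C` right before entering it. -/
theorem IsReducedProd.exists_split (amal : IsAmalgamatedFreeProduct (A true) (A false) C)
    {i : Bool} {l : List G} (hl : ∀ x ∈ l, ∃ k, x ∈ A k) {p : G} (hp : ¬ IsReducedProd A C i p)
    (h : IsReducedProd A C i (p * l.prod)) :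
    ∃ l₁ y l₂, l = l₁ ++ y :: l₂ ∧ p * l₁.prod ∈ C ∧ y ∈ A i := by
  induction l generalizing p with
  | nil => simp [hp] at h
  | cons x l ih =>
    by_cases hpx : IsReducedProd A C i (p * x)
    · obtain ⟨k, hk⟩ := hl x (by simp)
      rcases hpx.mul_right amal (inv_mem hk) with hc | ⟨hc, hx⟩
      · rw [mul_inv_cancel_right] at hc
        exact absurd hc hp
      · rw [mul_inv_cancel_right] at hc
        exact ⟨[], x, l, rfl, by simpa using hc, by simpa using hx⟩
    · rw [List.prod_cons, ← mul_assoc] at h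
      obtain ⟨l₁, y, l₂, rfl, h1, h2⟩ := ih (fun x hx => hl x (by simp [hx])) hpx h
      exact ⟨x :: l₁, y, l₂, rfl, by simpa [mul_assoc] using h1, h2⟩

variable {X : Bool → Set G} {𝒞 : Set G}

theorem mem_factor_of_mem_union (hXsub : ∀ i, X i ⊆ (A i : Set G)) {x : G}
    (hx : x ∈ X true ∪ X false) : ∃ k, x ∈ A k := by
  rcases hx with hx | hx
  exacts [⟨true, hXsub _ hx⟩, ⟨false, hXsub _ hx⟩]

/-- The factors are undistorted as soon as the amalgamated subgroup is. -/
theorem IsAmalgamatedFreeProduct.wordLength_factor_le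
    (amal : IsAmalgamatedFreeProduct (A true) (A false) C)
    (h𝒞inv : ∀ c ∈ 𝒞, c⁻¹ ∈ 𝒞) (h𝒞gen : Subgroup.closure 𝒞 = C)
    (hXinv : ∀ i, ∀ x ∈ X i, x⁻¹ ∈ X i) (hXsub : ∀ i, X i ⊆ (A i : Set G))
    (hXgen : ∀ i, Subgroup.closure (X i) = A i) (hX𝒞 : ∀ i, 𝒞 ⊆ X i) {lam : ℕ} (hlam1 : 1 ≤ lam)
    (hlam : ∀ c ∈ C, wordLength 𝒞 c ≤ lam * wordLength (X true ∪ X false) c) (j : Bool) :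
    ∀ l : List G, IsWordOver (X true ∪ X false) l → l.prod ∈ A j →
      wordLength (X j) l.prod ≤ lam * l.length := by
  have hC : ∀ l : List G, IsWordOver (X true ∪ X false) l → l.prod ∈ C →
      wordLength (X j) l.prod ≤ lam * l.length := fun l hl hlC =>
    (wordLength_anti h𝒞inv (hX𝒞 j) (h𝒞gen ▸ hlC)).trans
      ((hlam _ hlC).trans (Nat.mul_le_mul_left _ (wordLength_prod_le hl)))
  intro l
  induction hn : l.length using Nat.strong_induction_on generalizing l with
  | _ n ih =>
    intro hl hlA
    subst hn
    by_cases hlC : l.prod ∈ C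
    · exact hC l hl hlC
    · obtain ⟨l₁, y, l₂, rfl, h1, hy⟩ := IsReducedProd.exists_split amal (p := 1) (i := j)
        (fun x hx => mem_factor_of_mem_union hXsub (hl x hx))
        (fun h => h.notMem amal (one_mem C)) (by simpa using IsReducedProd.single hlA hlC)
      rw [one_mul] at h1
      have hl₁ : IsWordOver (X true ∪ X false) l₁ := hl.of_subset (by simp)
      have hl₂ : IsWordOver (X true ∪ X false) l₂ := hl.of_subset fun x hx => by simp [hx]
      have hy𝒢 : y ∈ X true ∪ X false := hl y (by simp)
      have hl₁A := amal.le j h1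
      have hl₂A : l₂.prod ∈ A j := by
        rw [List.prod_append, List.prod_cons] at hlA
        exact (mul_mem_cancel_left hy).1 ((mul_mem_cancel_left hl₁A).1 hlA)
      have hylen : wordLength (X j) y ≤ lam := by
        by_cases hyX : y ∈ X j
        · have : wordLength (X j) [y].prod ≤ 1 :=
            wordLength_prod_le (by simpa [IsWordOver] using hyX)
          rw [List.prod_singleton] at this
          exact this.trans hlam1
        · have hyX' : y ∈ X (!j) := by
            cases j
            · exact hy𝒢.resolve_right hyX
            · exact hy𝒢.resolve_left hyX
          have hyC := amal.mem_of_mem_of_mem_not hy (hXsub _ hyX')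
          simpa using hC [y] (by simpa [IsWordOver] using hy𝒢) (by simpa using hyC)
      have e1 := hC l₁ hl₁ h1
      have e2 := ih l₂.length (by simp; omega) l₂ rfl hl₂ hl₂A
      have e3 := wordLength_mul_le (hXinv j) (hXgen j ▸ hl₁A) (hXgen j ▸ mul_mem hy hl₂A)
      have e4 := wordLength_mul_le (hXinv j) (hXgen j ▸ hy) (hXgen j ▸ hl₂A)
      simp only [List.prod_append, List.prod_cons, List.length_append, List.length_cons]
      linarith

/-- Splitting a geodesic at the last element of `C` before the remaining syllables. -/
theorem IsAmalgamatedFreeProduct.exists_wordLength_add_le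
    (amal : IsAmalgamatedFreeProduct (A true) (A false) C) (hXsub : ∀ i, X i ⊆ (A i : Set G))
    (hinv : ∀ x ∈ X true ∪ X false, x⁻¹ ∈ X true ∪ X false)
    (hgen : Subgroup.closure (X true ∪ X false) = ⊤) {i : Bool} {a q : G} (ha : a ∈ A i)
    (hq : q = 1 ∨ IsReducedProd A C (!i) q) :
    ∃ c ∈ C, wordLength (X true ∪ X false) (a * c⁻¹) + wordLength (X true ∪ X false) (c * q) ≤
      wordLength (X true ∪ X false) (a * q) := by
  rcases hq with rfl | hq
  · exact ⟨1, one_mem C, by simp [wordLength_one]⟩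
  · obtain ⟨l, hl, hprod⟩ := exists_isGeodesicWord hinv (hgen ▸ Subgroup.mem_top (a * q))
    obtain ⟨l₁, y, l₂, rfl, h1, -⟩ := IsReducedProd.exists_split amal (p := a⁻¹) (i := !i)
      (fun x hx => mem_factor_of_mem_union hXsub (hl.1 x hx))
      (fun h => h.notMem_not amal (by simpa using ha)) (by simpa [hprod] using hq)
    refine ⟨(a⁻¹ * l₁.prod)⁻¹, inv_mem h1, ?_⟩
    have e1 := wordLength_prod_le (hl.1.of_subset (l₂ := l₁) (by simp))
    have e2 := wordLength_prod_le (hl.1.of_subset (l₂ := y :: l₂) (by simp))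
    have e3 := hl.2
    have e4 : (y :: l₂).prod = (a⁻¹ * l₁.prod)⁻¹ * q := by
      rw [List.prod_append] at hprod
      rw [mul_inv_rev, inv_inv, mul_assoc, ← hprod, inv_mul_cancel_left]
    rw [hprod] at e3
    rw [← e4, ← e3, inv_inv, mul_inv_cancel_left, List.length_append]
    omega

end Amalgam

section ListAppend

variable {α : Type*} {v u F : List α}

theorem prefix_or_of_prefix_append (h : v <+: u ++ F) :
    v <+: u ∨ ∃ t, v = u ++ t ∧ t <+: F := by
  rcases List.prefix_or_prefix_of_prefix h (List.prefix_append u F) with h1 | ⟨t, rfl⟩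
  · exact Or.inl h1
  · exact Or.inr ⟨t, rfl, (List.prefix_append_right_inj u).1 h⟩

theorem suffix_or_of_suffix_append (h : v <:+ u ++ F) :
    v <:+ F ∨ ∃ t, v = t ++ F ∧ t <:+ u := by
  rcases List.suffix_or_suffix_of_suffix h (List.suffix_append u F) with h1 | ⟨t, rfl⟩
  · exact Or.inl h1
  · obtain ⟨s, hs⟩ := h
    exact Or.inr ⟨t, rfl, s, List.append_cancel_right (by simpa using hs)⟩

end ListAppend

section NormalForm

variable {G : Type u} [Group G] {A : Bool → Subgroup G} {C : Subgroup G} {X : Bool → Set G}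

/-- A list of alternating, coset-shortest geodesic syllables outside `C`, the first of which
is a word over `X i`. -/
inductive IsSyllableList (X : Bool → Set G) (C : Subgroup G) : Bool → List (List G) → Prop
  | nil (i : Bool) : IsSyllableList X C i []
  | cons {i : Bool} {u : List G} {L : List (List G)} : IsGeodesicWord (X i) u → u.prod ∉ C →
      ShortestIn (X i) u.prod {x | ∃ c ∈ C, x = c * u.prod} → IsSyllableList X C (!i) L →
      IsSyllableList X C i (u :: L)

theorem IsGeodesicWord.prod_mem_factor (hXgen : ∀ i, Subgroup.closure (X i) = A i) {i : Bool}
    {u : List G} (hu : IsGeodesicWord (X i) u) : u.prod ∈ A i :=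
  hXgen i ▸ hu.1.prod_mem

theorem isGeodesicWord_nil (Y : Set G) : IsGeodesicWord Y [] :=
  ⟨by simp [IsWordOver], by simp [wordLength_one]⟩

theorem IsSyllableList.prod_flatten (hXgen : ∀ i, Subgroup.closure (X i) = A i) {i : Bool}
    {L : List (List G)} (hL : IsSyllableList X C i L) :
    L.flatten.prod = 1 ∨ IsReducedProd A C i L.flatten.prod := by
  induction hL with
  | nil i => simp
  | cons hu huC _ _ ih =>
    right
    rw [List.flatten_cons, List.prod_append]
    rcases ih with ih | ih
    · rw [ih, mul_one]
      exact .single (hu.prod_mem_factor hXgen) huC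
    · exact .cons (hu.prod_mem_factor hXgen) huC ih

theorem IsSyllableList.isWordOver {i : Bool} {L : List (List G)} (hL : IsSyllableList X C i L) :
    IsWordOver (X true ∪ X false) L.flatten := by
  induction hL with
  | nil i => simp [IsWordOver]
  | @cons i u L hu _ _ _ ih =>
    rw [List.flatten_cons]
    exact IsWordOver.append (fun x hx => subset_union_bool X i (hu.1 x hx)) ih

theorem IsSyllableList.getD {i : Bool} {L : List (List G)} (hL : IsSyllableList X C i L) {k : ℕ}
    (hk : k < L.length) :
    IsGeodesicWord (X (not^[k] i)) (L.getD k []) ∧ (L.getD k []).prod ∉ C ∧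
      ShortestIn (X (not^[k] i)) (L.getD k []).prod {x | ∃ c ∈ C, x = c * (L.getD k []).prod} := by
  induction hL generalizing k with
  | nil i => simp at hk
  | cons hu huC hshort _ ih =>
    cases k with
    | zero => exact ⟨hu, huC, hshort⟩
    | succ k => exact ih (by simpa using hk)

/-- Prefixes of coset-shortest geodesic words are empty or coset-shortest outside `C`. -/
theorem IsGeodesicWord.shortest_of_prefix {Y : Set G} (hY : ∀ x ∈ Y, x⁻¹ ∈ Y)
    (hC : C ≤ Subgroup.closure Y) {u v : List G} (hu : IsGeodesicWord Y u)
    (hshort : ShortestIn Y u.prod {x | ∃ c ∈ C, x = c * u.prod}) (hv : v <+: u) :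
    v = [] ∨ (v.prod ∉ C ∧ ShortestIn Y v.prod {x | ∃ c ∈ C, x = c * v.prod}) := by
  have hvg := hu.of_infix hY hv.isInfix
  obtain ⟨t, rfl⟩ := hv
  have htg := hu.of_infix hY (List.suffix_append v t).isInfix
  have hlen := hu.2
  rw [List.length_append] at hlen
  have key : ∀ c ∈ C, v.length ≤ wordLength Y (c * v.prod) := by
    intro c hc
    have h1 := hshort.2 (c * (v ++ t).prod) ⟨c, hc, rfl⟩
    have h2 := wordLength_mul_le hY (mul_mem (hC hc) hvg.1.prod_mem) htg.1.prod_mem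
    rw [List.prod_append] at h1 hlen
    rw [mul_assoc] at h2
    have h3 := htg.2
    omega
  by_cases hvC : v.prod ∈ C
  · left
    have := key _ (inv_mem hvC)
    rw [inv_mul_cancel, wordLength_one] at this
    exact List.length_eq_zero_iff.1 (Nat.le_zero.1 this)
  · right
    refine ⟨hvC, ⟨1, one_mem C, by simp⟩, ?_⟩
    rintro _ ⟨c, hc, rfl⟩
    rw [← hvg.2]
    exact key c hc

theorem IsSyllableList.of_prefix (hXinv : ∀ i, ∀ x ∈ X i, x⁻¹ ∈ X i)
    (hC : ∀ i, C ≤ Subgroup.closure (X i)) {i : Bool} {L : List (List G)}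
    (hL : IsSyllableList X C i L) {v : List G} (hv : v <+: L.flatten) :
    ∃ L', v = L'.flatten ∧ IsSyllableList X C i L' := by
  induction hL generalizing v with
  | nil i => exact ⟨[], by simpa using hv, .nil i⟩
  | @cons i u L hu huC hshort _ ih =>
    rw [List.flatten_cons] at hv
    rcases prefix_or_of_prefix_append hv with hv | ⟨t, rfl, ht⟩
    · rcases hu.shortest_of_prefix (hXinv i) (hC i) hshort hv with rfl | ⟨h1, h2⟩
      · exact ⟨[], rfl, .nil i⟩
      · exact ⟨[v], by simp, .cons (hu.of_infix (hXinv i) hv.isInfix) h1 h2 (.nil _)⟩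
    · obtain ⟨L', rfl, hL'⟩ := ih ht
      exact ⟨u :: L', by simp, .cons hu huC hshort hL'⟩

/-- A geodesic word over some `X i` followed by coset-shortest syllables starting in `!i`. -/
def IsNormalWord (X : Bool → Set G) (C : Subgroup G) (v : List G) : Prop :=
  ∃ i u L, v = u ++ L.flatten ∧ IsGeodesicWord (X i) u ∧ IsSyllableList X C (!i) L

theorem IsNormalWord.of_prefix (hXinv : ∀ i, ∀ x ∈ X i, x⁻¹ ∈ X i)
    (hC : ∀ i, C ≤ Subgroup.closure (X i)) {v w : List G} (hw : IsNormalWord X C w)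
    (hv : v <+: w) : IsNormalWord X C v := by
  obtain ⟨i, u, L, rfl, hu, hL⟩ := hw
  rcases prefix_or_of_prefix_append hv with hv | ⟨t, rfl, ht⟩
  · exact ⟨i, v, [], by simp, hu.of_infix (hXinv i) hv.isInfix, .nil _⟩
  · obtain ⟨L', rfl, hL'⟩ := hL.of_prefix hXinv hC ht
    exact ⟨i, u, L', rfl, hu, hL'⟩

theorem IsSyllableList.isNormalWord_of_suffix (hXinv : ∀ i, ∀ x ∈ X i, x⁻¹ ∈ X i) {i : Bool}
    {L : List (List G)} (hL : IsSyllableList X C i L) {v : List G} (hv : v <:+ L.flatten) :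
    IsNormalWord X C v := by
  induction hL with
  | nil i => exact ⟨i, [], [], by simpa using hv, isGeodesicWord_nil _, .nil _⟩
  | @cons i u L hu _ _ hL ih =>
    rw [List.flatten_cons] at hv
    rcases suffix_or_of_suffix_append hv with hv | ⟨t, rfl, ht⟩
    · exact ih hv
    · exact ⟨i, t, L, rfl, hu.of_infix (hXinv i) ht.isInfix, hL⟩

theorem IsNormalWord.of_suffix (hXinv : ∀ i, ∀ x ∈ X i, x⁻¹ ∈ X i) {v w : List G}
    (hw : IsNormalWord X C w) (hv : v <:+ w) : IsNormalWord X C v := by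
  obtain ⟨i, u, L, rfl, hu, hL⟩ := hw
  rcases suffix_or_of_suffix_append hv with hv | ⟨t, rfl, ht⟩
  · exact hL.isNormalWord_of_suffix hXinv hv
  · exact ⟨i, t, L, rfl, hu.of_infix (hXinv i) ht.isInfix, hL⟩

theorem IsNormalWord.of_infix (hXinv : ∀ i, ∀ x ∈ X i, x⁻¹ ∈ X i)
    (hC : ∀ i, C ≤ Subgroup.closure (X i)) {v w : List G} (hw : IsNormalWord X C w)
    (hv : v <:+: w) : IsNormalWord X C v := by
  obtain ⟨t, h1, h2⟩ := List.infix_iff_prefix_suffix.1 hv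
  exact (hw.of_suffix hXinv h2).of_prefix hXinv hC h1

/-- Existence of normal forms. -/
theorem IsReducedProd.exists_syllables (hCA : ∀ i, C ≤ A i) (hXinv : ∀ i, ∀ x ∈ X i, x⁻¹ ∈ X i)
    (hXgen : ∀ i, Subgroup.closure (X i) = A i) {i : Bool} {g : G} (hg : IsReducedProd A C i g) :
    ∃ u L, IsGeodesicWord (X i) u ∧ u.prod ∉ C ∧ IsSyllableList X C (!i) L ∧
      u.prod * L.flatten.prod = g := by
  induction hg with
  | @single i b hb hbC =>
    obtain ⟨u, hu, rfl⟩ := exists_isGeodesicWord (hXinv i) (hXgen i ▸ hb : b ∈ _)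
    exact ⟨u, [], hu, hbC, .nil _, by simp⟩
  | @cons i b p hb hbC _ ih =>
    obtain ⟨u, L, hu, huC, hL, rfl⟩ := ih
    obtain ⟨a, ⟨c, hc, rfl⟩, hmin⟩ :=
      exists_minimalFor_of_wellFoundedLT (· ∈ {x | ∃ c ∈ C, x = c * u.prod})
        (wordLength (X !i)) ⟨u.prod, 1, one_mem C, by simp⟩
    have hcu : c * u.prod ∈ A (!i) := mul_mem (hCA _ hc) (hu.prod_mem_factor hXgen)
    obtain ⟨v, hv, hvprod⟩ := exists_isGeodesicWord (hXinv !i) (hXgen (!i) ▸ hcu : c * u.prod ∈ _)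
    have hbc : b * c⁻¹ ∈ A i := mul_mem hb (inv_mem (hCA _ hc))
    obtain ⟨w, hw, hwprod⟩ := exists_isGeodesicWord (hXinv i) (hXgen i ▸ hbc : b * c⁻¹ ∈ _)
    refine ⟨w, v :: L, hw, ?_, .cons hv ?_ ⟨⟨1, one_mem C, by simp⟩, ?_⟩ hL, ?_⟩
    · rw [hwprod]
      exact fun h => hbC ((mul_mem_cancel_right (inv_mem hc)).1 h)
    · rw [hvprod]
      exact fun h => huC ((mul_mem_cancel_left hc).1 h)
    · rintro _ ⟨d, hd, rfl⟩
      rw [hvprod]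
      rcases le_total (wordLength (X !i) (c * u.prod)) (wordLength (X !i) (d * (c * u.prod)))
        with h | h
      · exact h
      · exact hmin ⟨d * c, mul_mem hd hc, by rw [mul_assoc]⟩ h
    · rw [List.flatten_cons, List.prod_append, hwprod, hvprod]
      group

variable {ℓ : G → ℕ} {B K Λ : ℕ}

theorem IsSyllableList.length_le (amal : IsAmalgamatedFreeProduct (A true) (A false) C)
    (hXsub : ∀ i, X i ⊆ (A i : Set G)) (hXgen : ∀ i, Subgroup.closure (X i) = A i)
    (hinv : ∀ x ∈ X true ∪ X false, x⁻¹ ∈ X true ∪ X false)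
    (hgen : Subgroup.closure (X true ∪ X false) = ⊤)
    (hΛ : ∀ g, ℓ g ≤ Λ * wordLength (X true ∪ X false) g)
    (hK : ∀ i, ∀ a ∈ A i, ShortestIn (X i) a {x | ∃ c ∈ C, x = c * a} → ∀ c ∈ C, ∀ c' ∈ C,
      B * ℓ c + wordLength (X i) a ≤ K * ℓ (c * a * c'⁻¹) + K + B * ℓ c')
    {i : Bool} {L : List (List G)} (hL : IsSyllableList X C i L) {c : G} (hc : c ∈ C) :
    B * ℓ c + L.flatten.length ≤
      (B * Λ + K * Λ + K) * wordLength (X true ∪ X false) (c * L.flatten.prod) := by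
  induction hL generalizing c with
  | nil i =>
    have := Nat.mul_le_mul_left B (hΛ c)
    simp only [List.flatten_nil, List.length_nil, List.prod_nil, mul_one, add_zero]
    nlinarith [Nat.zero_le ((K * Λ + K) * wordLength (X true ∪ X false) c)]
  | @cons i u L hu huC hshort hL ih =>
    have huA := hu.prod_mem_factor hXgen
    obtain ⟨c', hc', hlen⟩ := amal.exists_wordLength_add_le hXsub hinv hgen
      (mul_mem (amal.le i hc) huA) (hL.prod_flatten hXgen)
    have h1 := hK i _ huA hshort c hc c' hc'
    have h2 := ih hc'
    have h3 := Nat.mul_le_mul_left K (hΛ (c * u.prod * c'⁻¹))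
    have h4 : 1 ≤ wordLength (X true ∪ X false) (c * u.prod * c'⁻¹) := by
      refine Nat.one_le_iff_ne_zero.2 fun h => huC ?_
      have h5 := eq_one_of_wordLength_eq_zero hinv (hgen ▸ Subgroup.mem_top _) h
      have h6 : c * u.prod * c'⁻¹ ∈ C := h5 ▸ one_mem C
      exact (mul_mem_cancel_left hc).1 ((mul_mem_cancel_right (inv_mem hc')).1 h6)
    have h5 := Nat.mul_le_mul_left (B * Λ + K * Λ + K) hlen
    rw [List.flatten_cons, List.length_append, List.prod_append, hu.2, ← mul_assoc]
    nlinarith [Nat.mul_le_mul_left K h4,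
      Nat.zero_le (B * Λ * wordLength (X true ∪ X false) (c * u.prod * c'⁻¹))]

theorem IsNormalWord.length_le (amal : IsAmalgamatedFreeProduct (A true) (A false) C)
    (hXsub : ∀ i, X i ⊆ (A i : Set G)) (hXgen : ∀ i, Subgroup.closure (X i) = A i)
    (hinv : ∀ x ∈ X true ∪ X false, x⁻¹ ∈ X true ∪ X false)
    (hgen : Subgroup.closure (X true ∪ X false) = ⊤)
    (hmul : ∀ g h, ℓ (g * h) ≤ ℓ g + ℓ h)
    (hΛ : ∀ g, ℓ g ≤ Λ * wordLength (X true ∪ X false) g)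
    (hB : ∀ i, ∀ a ∈ A i, wordLength (X i) a ≤ B * ℓ a)
    (hK : ∀ i, ∀ a ∈ A i, ShortestIn (X i) a {x | ∃ c ∈ C, x = c * a} → ∀ c ∈ C, ∀ c' ∈ C,
      B * ℓ c + wordLength (X i) a ≤ K * ℓ (c * a * c'⁻¹) + K + B * ℓ c')
    {v : List G} (hv : IsNormalWord X C v) :
    v.length ≤ (B * Λ + K * Λ + K) * wordLength (X true ∪ X false) v.prod := by
  obtain ⟨i, u, L, rfl, hu, hL⟩ := hv
  have huA := hu.prod_mem_factor hXgen
  obtain ⟨c, hc, hlen⟩ := amal.exists_wordLength_add_le hXsub hinv hgen huA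
    (hL.prod_flatten hXgen)
  have h1 := hL.length_le amal hXsub hXgen hinv hgen hΛ hK hc
  have h2 := hB i _ huA
  have h3 := hmul (u.prod * c⁻¹) c
  rw [inv_mul_cancel_right] at h3
  have h4 := Nat.mul_le_mul_left B (h3.trans (Nat.add_le_add_right (hΛ (u.prod * c⁻¹)) _))
  have h5 := Nat.mul_le_mul_left (B * Λ + K * Λ + K) hlen
  rw [List.length_append, List.prod_append, hu.2]
  nlinarith [Nat.zero_le ((K * Λ + K) * wordLength (X true ∪ X false) (u.prod * c⁻¹))]

end NormalForm

/-- **Lemma 3.1(1).** Every element of the amalgam has a quasigeodesic representative in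
alternating normal form with coset-shortest syllables. -/
theorem normal_form_quasigeodesic {G : Type u} [Group G]
    (A : Bool → Subgroup G) (C : Subgroup G)
    (hG : IsWordHyperbolic G)
    (amal : IsAmalgamatedFreeProduct (A true) (A false) C)
    (hvc : IsVirtuallyCyclic ↥C)
    (X : Bool → Set G) (𝒞 : Set G)
    (h𝒞fin : 𝒞.Finite) (h𝒞C : 𝒞 ⊆ (C : Set G)) (h𝒞inv : ∀ c ∈ 𝒞, c⁻¹ ∈ 𝒞)
    (h𝒞gen : Subgroup.closure 𝒞 = C)
    (hXfin : ∀ i, (X i).Finite) (hXinv : ∀ i, ∀ x ∈ X i, x⁻¹ ∈ X i)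
    (hXsub : ∀ i, X i ⊆ (A i : Set G)) (hXgen : ∀ i, Subgroup.closure (X i) = A i)
    (hX𝒞 : ∀ i, 𝒞 ⊆ X i) :
    ∃ K : ℝ, 0 < K ∧
      ∀ g : G, ∃ (s : ℕ) (uw : ℕ → List G) (j : ℕ → Bool),
        ((List.range (s + 1)).map uw).flatten.prod = g ∧
        IsQuasigeodesicWord (X true ∪ X false) K ((List.range (s + 1)).map uw).flatten ∧
        (∀ k ≤ s, IsGeodesicWord (X (j k)) (uw k)) ∧
        (∀ k, 0 < k → k ≤ s →
          (uw k).prod ∉ C ∧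
          ShortestIn (X (j k)) ((uw k).prod) {x | ∃ c ∈ C, x = c * (uw k).prod}) ∧
        (∀ k, 0 < k → k ≤ s → ∀ i : Bool,
          (uw k).prod ∈ A i → (uw k).prod ∉ C →
          (uw (k - 1)).prod ∈ A (!i) ∧ (uw (k - 1)).prod ∉ C) ∧
        (s = 0 → g ∈ C → IsGeodesicWord (X true) (uw 0)) := by

  obtain ⟨Y, ⟨hYfin, hYinv, hYgen⟩, δ, hY⟩ := hG.exists_isHyperbolicLength
  have hYmem : ∀ g, g ∈ Subgroup.closure Y := fun g => hYgen ▸ Subgroup.mem_top g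
  have hinv : ∀ x ∈ X true ∪ X false, x⁻¹ ∈ X true ∪ X false := fun x hx =>
    hx.imp (hXinv true x) (hXinv false x)
  have hgen : Subgroup.closure (X true ∪ X false) = ⊤ := by
    rw [Subgroup.closure_union, hXgen, hXgen, amal.sup_eq_top]
  have hmem : ∀ g, g ∈ Subgroup.closure (X true ∪ X false) := fun g => hgen ▸ Subgroup.mem_top g
  obtain ⟨Λ, hΛ⟩ := exists_wordLength_le_mul ((hXfin true).union (hXfin false)) hinv hYinv
    fun x _ => hYmem x
  replace hΛ := fun g => hΛ g (hmem g)
  obtain ⟨Λ', hΛ'⟩ := exists_wordLength_le_mul hYfin hYinv hinv fun x _ => hmem x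
  obtain ⟨μ, hμ⟩ := hvc.undistorted hY
    (fun g => eq_one_of_wordLength_eq_zero hYinv (hYmem g)) h𝒞inv h𝒞gen
  have hμ' : ∀ c ∈ C, wordLength 𝒞 c ≤ (μ * Λ + 1) * wordLength (X true ∪ X false) c := by
    intro c hc
    have h1 := hμ c hc
    have h2 := Nat.mul_le_mul_left μ (hΛ c)
    nlinarith
  have hfactor : ∀ j, ∀ a ∈ A j, wordLength (X j) a ≤ (μ * Λ + 1) * Λ' * wordLength Y a := by
    intro j a ha
    obtain ⟨l, hl, rfl⟩ := exists_isGeodesicWord hinv (hmem a)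
    have h1 := amal.wordLength_factor_le h𝒞inv h𝒞gen hXinv hXsub hXgen hX𝒞 (by omega) hμ' j l
      hl.1 ha
    rw [hl.2] at h1
    rw [mul_assoc]
    exact h1.trans (Nat.mul_le_mul_left _ (hΛ' _ (hYmem _)))
  set lam := (μ * Λ + 1) * Λ'
  have hsyl : ∀ i, ∃ K : ℕ, ∀ a ∈ A i, ShortestIn (X i) a {x | ∃ c ∈ C, x = c * a} →
      ∀ c ∈ C, ∀ c' ∈ C, 2 * lam * wordLength Y c + wordLength (X i) a ≤
        K * wordLength Y (c * a * c'⁻¹) + K + 2 * lam * wordLength Y c' := fun i =>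
    hvc.syllable_bound hY (amal.le i) (hXinv i) (hXgen i)
      (fun a ha => (hΛ a).trans (Nat.mul_le_mul_left _
        (wordLength_anti (hXinv i) (subset_union_bool X i) (hXgen i ▸ ha)))) (hfactor i)
  choose κ hκ using hsyl
  have hK : ∀ i, ∀ a ∈ A i, ShortestIn (X i) a {x | ∃ c ∈ C, x = c * a} →
      ∀ c ∈ C, ∀ c' ∈ C, 2 * lam * wordLength Y c + wordLength (X i) a ≤
        (κ true + κ false) * wordLength Y (c * a * c'⁻¹) + (κ true + κ false) +
          2 * lam * wordLength Y c' := by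
    intro i a ha hshort c hc c' hc'
    have h1 := hκ i a ha hshort c hc c' hc'
    have h2 : κ i ≤ κ true + κ false := by cases i <;> omega
    have h3 := Nat.mul_le_mul_right (wordLength Y (c * a * c'⁻¹)) h2
    omega
  have hlen : ∀ v, IsNormalWord X C v → v.length ≤
      (2 * lam * Λ + (κ true + κ false) * Λ + (κ true + κ false)) *
        wordLength (X true ∪ X false) v.prod := fun v hv =>
    hv.length_le amal hXsub hXgen hinv hgen hY.mul hΛ
      (fun i a ha => (hfactor i a ha).trans (by nlinarith [Nat.zero_le (lam * wordLength Y a)])) hK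
  set K := 2 * lam * Λ + (κ true + κ false) * Λ + (κ true + κ false)
  have hquasi : ∀ i u L, IsGeodesicWord (X i) u → IsSyllableList X C (!i) L →
      IsQuasigeodesicWord (X true ∪ X false) (K + 1 : ℝ) (u ++ L.flatten) := by
    intro i u L hu hL
    refine ⟨IsWordOver.append (fun x hx => subset_union_bool X i (hu.1 x hx)) hL.isWordOver,
      fun v hv => ?_⟩
    have h1 := hlen v (IsNormalWord.of_infix hXinv (fun i => hXgen i ▸ amal.le i)
      ⟨i, u, L, rfl, hu, hL⟩ hv)
    have h2 : (v.length : ℝ) ≤ K * wordLength (X true ∪ X false) v.prod := by exact_mod_cast h1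
    have h3 : (0 : ℝ) ≤ wordLength (X true ∪ X false) v.prod := Nat.cast_nonneg _
    have h4 : (0 : ℝ) ≤ K := Nat.cast_nonneg _
    linarith
  refine ⟨K + 1, by positivity, fun g => ?_⟩
  rcases amal.mem_or_isReducedProd g with hgC | ⟨i, hg⟩
  · obtain ⟨u, hu, rfl⟩ := exists_isGeodesicWord (hXinv true)
      (hXgen true ▸ amal.le true hgC : g ∈ _)
    refine ⟨0, fun _ => u, fun _ => true, by simp, ?_, fun _ _ => hu, ?_, ?_, fun _ _ => hu⟩
    · simpa using hquasi true u [] hu (.nil _)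
    all_goals intros; omega
  · obtain ⟨u, L, hu, huC, hL, rfl⟩ := hg.exists_syllables amal.le hXinv hXgen
    have hmap : (List.range (L.length + 1)).map (fun k => (u :: L).getD k []) = u :: L := by
      refine List.ext_getElem (by simp) fun n h1 h2 => ?_
      rw [List.getElem_map, List.getElem_range, List.getD_eq_getElem _ _ h2]
    have hgeod : ∀ k ≤ L.length, IsGeodesicWord (X (not^[k] i)) ((u :: L).getD k []) ∧
        ((u :: L).getD k []).prod ∉ C := by
      intro k hk
      cases k with
      | zero => exact ⟨hu, huC⟩
      | succ k => exact ⟨(hL.getD hk).1, (hL.getD hk).2.1⟩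
    refine ⟨L.length, fun k => (u :: L).getD k [], fun k => not^[k] i, ?_, ?_,
      fun k hk => (hgeod k hk).1, ?_, ?_, fun _ h => absurd h (hg.notMem amal)⟩
    · rw [hmap, List.flatten_cons, List.prod_append]
    · rw [hmap, List.flatten_cons]
      exact hquasi i u L hu hL
    · rintro (_ | k) hk0 hk
      · omega
      · exact (hL.getD hk).2
    · rintro (_ | k) hk0 hk i' hi' hC'
      · omega
      · obtain ⟨h1, h2⟩ := hgeod k (by omega)
        have h3 := (hgeod (k + 1) hk).1.prod_mem_factor hXgen
        have h4 : i' = not^[k + 1] i := by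
          by_contra hne
          have h5 : not^[k + 1] i = !i' := Bool.eq_not_of_ne (Ne.symm hne)
          exact hC' (amal.mem_of_mem_of_mem_not hi' (h5 ▸ h3))
        rw [h4, Function.iterate_succ_apply', Bool.not_not, Nat.add_sub_cancel]
        exact ⟨h1.prod_mem_factor hXgen, h2⟩
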